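/- There exists a universal constant C > 0 such that for every c > 0 and all sufficiently large even N = 2n, the biased random transposition shuffle satisfies d_TV(P^t(id, ·), U) ≤ C·e^{−c}, where t = ⌈(N/(2b))·(log N + c)⌉. -/

import Mathlib

open scoped BigOperators

noncomputable section

namespace BRT

/-- The transition matrix of the biased random transposition shuffle on `𝔖_N` determined
by the set `A ⊆ [N]` (with `B = Aᶜ`) and the bias parameters `a`, `b`:
`P(x,y) = 2a²/N²` if `y x⁻¹` is a transposition of two elements of `A`, `2b²/N²` if it is a
transposition of two elements of `B`, `2ab/N²` if it transposes an element of `A` with one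
of `B`, `(a²|A| + b²|B|)/N²` if `y = x`, and `0` otherwise. -/
def transMat (a b : ℝ) {N : ℕ} (A : Finset (Fin N)) :
    Matrix (Equiv.Perm (Fin N)) (Equiv.Perm (Fin N)) ℝ :=
  fun x y =>
    if y = x then (a ^ 2 * A.card + b ^ 2 * Aᶜ.card) / (N : ℝ) ^ 2
    else if ∃ i j : Fin N, i ≠ j ∧ i ∈ A ∧ j ∈ A ∧ y * x⁻¹ = Equiv.swap i j then
      2 * a ^ 2 / (N : ℝ) ^ 2
    else if ∃ i j : Fin N, i ≠ j ∧ i ∉ A ∧ j ∉ A ∧ y * x⁻¹ = Equiv.swap i j then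
      2 * b ^ 2 / (N : ℝ) ^ 2
    else if ∃ i j : Fin N, i ∈ A ∧ j ∉ A ∧ y * x⁻¹ = Equiv.swap i j then
      2 * a * b / (N : ℝ) ^ 2
    else 0

/-- Total variation distance between two probability mass functions on a finite type. -/
def dTV {α : Type*} [Fintype α] (p q : α → ℝ) : ℝ :=
  (∑ x, |p x - q x|) / 2

/-- The uniform distribution on permutations of `Fin N`. -/
def unif (N : ℕ) : Equiv.Perm (Fin N) → ℝ :=
  fun _ => ((N.factorial : ℝ))⁻¹

/-!
By Cauchy–Schwarz and right invariance, `(2 * dTV) ^ 2` is at most the trace of the `2 * t`-th power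
of the transition matrix minus `1`, so the eigenvalues have to be located and counted.

For a subrepresentation `W` of an orthogonal representation of `𝔖_S`, let `fixity ρ W S` be the
largest size of an `R ⊆ S` such that `𝔖_R` fixes a nonzero vector of `W`. It bounds every eigenvalue
`μ` on `W` of the sum of the transpositions `(x m)`, `m ∈ S`. Indeed, pick a `μ`-eigenvector `w`
fixed by `𝔖_R` with `R ⊆ S \ {x}` maximal, and let `u` be the sum of `(x m) w` over
`m ∈ R ∪ {x}`. If `u ≠ 0`, then `μ = |R| + 1` and `u` is fixed by `𝔖_{R ∪ {x}}`; if `u = 0`, then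
induction applies to `S \ R`.

This gives the octopus inequality of Caputo, Liggett and Richthammer for transposition sums, which
reduces unequal weights to equal ones, and it bounds the shuffle with equal weights. Hence the
functions orthogonal to everything fixed by some `𝔖_R` with `|R| > N - k` have Rayleigh quotient at
most `eigBound b N k`, while the orthocomplement of their space has dimension at most
`dimBound N (k - 1)`. The negative eigenvalues are handled by twisting with the sign.
-/

open Equiv

section SupportedIn

variable {α : Type*}

/-- The permutations moving no point outside `S`, i.e. the copy of `𝔖_S` inside `Perm α`. -/
def supportedIn (S : Finset α) : Subgroup (Perm α) :=
  fixingSubgroup (Perm α) (S : Set α)ᶜ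

lemma mem_supportedIn {S : Finset α} {g : Perm α} : g ∈ supportedIn S ↔ ∀ y ∉ S, g y = y := by
  simp [supportedIn, mem_fixingSubgroup_iff]

lemma supportedIn_mono {S T : Finset α} (h : S ⊆ T) : supportedIn S ≤ supportedIn T :=
  fun _ hg => mem_supportedIn.2 fun y hy => mem_supportedIn.1 hg y fun hS => hy (h hS)

lemma supportedIn_empty : supportedIn (∅ : Finset α) = ⊥ := by
  refine (Subgroup.eq_bot_iff_forall _).2 fun g hg => Equiv.ext fun y => ?_
  simpa using mem_supportedIn.1 hg y (Finset.notMem_empty y)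

lemma swap_mem_supportedIn [DecidableEq α] {S : Finset α} {x y : α} (hx : x ∈ S) (hy : y ∈ S) :
    swap x y ∈ supportedIn S :=
  mem_supportedIn.2 fun _ hz =>
    swap_apply_of_ne_of_ne (ne_of_mem_of_not_mem hx hz).symm (ne_of_mem_of_not_mem hy hz).symm

lemma apply_mem_of_mem_supportedIn {S : Finset α} {g : Perm α} (hg : g ∈ supportedIn S) {y : α}
    (hy : y ∈ S) : g y ∈ S := by
  by_contra h
  exact h ((g.injective (mem_supportedIn.1 hg _ h)).symm ▸ hy)

lemma map_eq_of_mem_supportedIn {S : Finset α} {g : Perm α} (hg : g ∈ supportedIn S) :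
    S.map g.toEmbedding = S :=
  Finset.map_eq_of_subset (Finset.map_subset_iff_subset_preimage.2 fun _ hy => by
    simpa using apply_mem_of_mem_supportedIn hg hy)

end SupportedIn

section Representation

variable {k V α : Type*} [CommRing k] [AddCommGroup V] [Module k V]

/-- The vectors of a representation of `Perm α` fixed by every permutation of the letters `R`. -/
def fixedVectors (ρ : Representation k (Perm α) V) (R : Finset α) : Submodule k V :=
  Representation.invariants (MonoidHom.comp ρ (supportedIn R).subtype)

/-- `W` is a subrepresentation for the group of permutations of the letters `S`. -/
def IsStableOn (ρ : Representation k (Perm α) V) (S : Finset α) (W : Submodule k V) : Prop :=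
  ∀ g ∈ supportedIn S, ∀ v ∈ W, ρ g v ∈ W

variable {ρ : Representation k (Perm α) V} {R S T : Finset α} {W : Submodule k V}
  {g : Perm α} {x z : α} {v w : V}

lemma mem_fixedVectors : w ∈ fixedVectors ρ R ↔ ∀ g ∈ supportedIn R, ρ g w = w := by
  simp [fixedVectors, Representation.mem_invariants]

lemma fixedVectors_empty : fixedVectors ρ ∅ = ⊤ :=
  (Submodule.eq_top_iff').2 fun w => mem_fixedVectors.2 fun g hg => by
    rw [supportedIn_empty, Subgroup.mem_bot] at hg
    simp [hg]

lemma isStableOn_top : IsStableOn ρ S ⊤ := fun _ _ _ _ => Submodule.mem_top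

lemma IsStableOn.mono (hW : IsStableOn ρ T W) (h : S ⊆ T) : IsStableOn ρ S W :=
  fun g hg => hW g (supportedIn_mono h hg)

lemma IsStableOn.inf_eigenspace (hW : IsStableOn ρ S W) {X : Module.End k V}
    (hX : ∀ g ∈ supportedIn S, ∀ v, ρ g (X v) = X (ρ g v)) (μ : k) :
    IsStableOn ρ S (W ⊓ Module.End.eigenspace X μ) := by
  rintro g hg v ⟨hvW, hvX⟩
  refine ⟨hW g hg v hvW, ?_⟩
  rw [SetLike.mem_coe, Module.End.mem_eigenspace_iff] at hvX ⊢
  rw [← hX g hg, hvX, map_smul]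

/-- The largest number of letters of `S` all of whose permutations fix a common nonzero vector
of `W` (`0` if `W = ⊥`). For an irreducible `W` this is the first part of its partition. -/
def fixity (ρ : Representation k (Perm α) V) (W : Submodule k V) (S : Finset α) : ℕ :=
  open Classical in
  (S.powerset.filter fun R => W ⊓ fixedVectors ρ R ≠ ⊥).sup Finset.card

lemma card_le_fixity (hR : R ⊆ S) (hwW : w ∈ W) (hwR : w ∈ fixedVectors ρ R) (hw : w ≠ 0) :
    R.card ≤ fixity ρ W S := by
  classical
  refine Finset.le_sup (f := Finset.card) (Finset.mem_filter.2 ⟨Finset.mem_powerset.2 hR, ?_⟩)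
  exact (Submodule.ne_bot_iff _).2 ⟨w, ⟨hwW, hwR⟩, hw⟩

lemma fixity_le {r : ℕ} (h : ∀ R ⊆ S, W ⊓ fixedVectors ρ R ≠ ⊥ → R.card ≤ r) :
    fixity ρ W S ≤ r := by
  classical
  refine Finset.sup_le fun R hR => ?_
  obtain ⟨hRS, hne⟩ := Finset.mem_filter.1 hR
  exact h R (Finset.mem_powerset.1 hRS) hne

lemma fixity_mono {W' : Submodule k V} (hW : W ≤ W') (hS : S ⊆ T) :
    fixity ρ W S ≤ fixity ρ W' T := by
  refine fixity_le fun R hR hne => ?_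
  obtain ⟨w, ⟨hwW, hwR⟩, hw⟩ := Submodule.exists_mem_ne_zero_of_ne_bot hne
  exact card_le_fixity (hR.trans hS) (hW hwW) hwR hw

lemma exists_card_eq_fixity (ρ : Representation k (Perm α) V) (hW : W ≠ ⊥) (S : Finset α) :
    ∃ R ⊆ S, R.card = fixity ρ W S ∧ ∃ w ∈ W, w ∈ fixedVectors ρ R ∧ w ≠ 0 := by
  classical
  have hne : (S.powerset.filter fun R => W ⊓ fixedVectors ρ R ≠ ⊥).Nonempty :=
    ⟨∅, by simpa [fixedVectors_empty] using hW⟩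
  obtain ⟨R, hR, hcard⟩ := Finset.exists_mem_eq_sup _ hne Finset.card
  obtain ⟨hRS, hRne⟩ := Finset.mem_filter.1 hR
  obtain ⟨w, ⟨hwW, hwR⟩, hw⟩ := Submodule.exists_mem_ne_zero_of_ne_bot hRne
  exact ⟨R, Finset.mem_powerset.1 hRS, hcard.symm, w, hwW, hwR, hw⟩

variable [DecidableEq α]

/-- The sum of the transpositions `(x m)` over `m ∈ S`; a term with `m = x` is the identity. -/
def starSum (ρ : Representation k (Perm α) V) (S : Finset α) (x : α) : Module.End k V :=
  ∑ m ∈ S, ρ (swap x m)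

/-- The sum of the transpositions `(x y)` over all ordered pairs of elements of `S`, the pairs
with `x = y` contributing the identity. -/
def pairSum (ρ : Representation k (Perm α) V) (S : Finset α) : Module.End k V :=
  ∑ x ∈ S, starSum ρ S x

lemma starSum_apply (ρ : Representation k (Perm α) V) (S : Finset α) (x : α) (v : V) :
    starSum ρ S x v = ∑ m ∈ S, ρ (swap x m) v := by
  simp only [starSum, LinearMap.sum_apply]

lemma pairSum_apply (ρ : Representation k (Perm α) V) (S : Finset α) (v : V) :
    pairSum ρ S v = ∑ x ∈ S, starSum ρ S x v := by
  simp only [pairSum, LinearMap.sum_apply]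

lemma starSum_insert (h : z ∉ R) :
    starSum ρ (insert z R) x = ρ (swap x z) + starSum ρ R x :=
  Finset.sum_insert h

lemma starSum_insert_self (h : x ∉ R) : starSum ρ (insert x R) x = 1 + starSum ρ R x := by
  rw [starSum_insert h, swap_self, ← Perm.one_def, map_one]

lemma starSum_sdiff_add (h : T ⊆ S) :
    starSum ρ (S \ T) x + starSum ρ T x = starSum ρ S x :=
  Finset.sum_sdiff h

lemma apply_starSum (g : Perm α) (S : Finset α) (x : α) (v : V) :
    ρ g (starSum ρ S x v) = starSum ρ (S.map g.toEmbedding) (g x) (ρ g v) := by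
  simp only [starSum_apply, map_sum, Finset.sum_map, Equiv.coe_toEmbedding]
  refine Finset.sum_congr rfl fun m _ => ?_
  rw [← Module.End.mul_apply, ← map_mul, mul_swap_eq_swap_mul, map_mul, Module.End.mul_apply]

lemma apply_pairSum (g : Perm α) (S : Finset α) (v : V) :
    ρ g (pairSum ρ S v) = pairSum ρ (S.map g.toEmbedding) (ρ g v) := by
  simp only [pairSum_apply, map_sum, apply_starSum, Finset.sum_map, Equiv.coe_toEmbedding]

lemma apply_starSum_of_fixes (hg : g ∈ supportedIn S) (hx : g x = x) (v : V) :
    ρ g (starSum ρ S x v) = starSum ρ S x (ρ g v) := by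
  rw [apply_starSum, map_eq_of_mem_supportedIn hg, hx]

lemma apply_pairSum_of_mem_supportedIn (hg : g ∈ supportedIn S) (v : V) :
    ρ g (pairSum ρ S v) = pairSum ρ S (ρ g v) := by
  rw [apply_pairSum, map_eq_of_mem_supportedIn hg]

lemma starSum_pairSum_comm (hx : x ∈ S) (v : V) :
    starSum ρ S x (pairSum ρ S v) = pairSum ρ S (starSum ρ S x v) := by
  rw [starSum_apply, starSum_apply, map_sum]
  exact Finset.sum_congr rfl fun m hm =>
    apply_pairSum_of_mem_supportedIn (swap_mem_supportedIn hx hm) v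

lemma IsStableOn.starSum_mem (hW : IsStableOn ρ S W) (hR : R ⊆ S) (hx : x ∈ S) (hv : v ∈ W) :
    starSum ρ R x v ∈ W := by
  rw [starSum_apply]
  exact W.sum_mem fun m hm => hW _ (swap_mem_supportedIn hx (hR hm)) v hv

lemma IsStableOn.pairSum_mem (hW : IsStableOn ρ S W) (hv : v ∈ W) : pairSum ρ S v ∈ W := by
  rw [pairSum_apply]
  exact W.sum_mem fun x hx => hW.starSum_mem subset_rfl hx hv

-- `g (x m) = (x g(m)) h`, where `h` moves only letters of `R`.
lemma starSum_mem_fixedVectors_insert (hw : w ∈ fixedVectors ρ R) :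
    starSum ρ (insert x R) x w ∈ fixedVectors ρ (insert x R) := by
  refine mem_fixedVectors.2 fun g hg => ?_
  have hmove : ∀ m ∈ insert x R, ρ g (ρ (swap x m) w) = ρ (swap x (g m)) w := by
    intro m hm
    have hgm := apply_mem_of_mem_supportedIn hg hm
    have hfix : swap x (g m) * g * swap x m ∈ supportedIn R := by
      refine mem_supportedIn.2 fun y hy => ?_
      by_cases hyx : y = x
      · simp [hyx]
      have hyR : y ∉ insert x R := by simp [hyx, hy]
      have hym : y ≠ m := (ne_of_mem_of_not_mem hm hyR).symm
      have hygm : y ≠ g m := (ne_of_mem_of_not_mem hgm hyR).symm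
      simp [swap_apply_of_ne_of_ne hyx hym, swap_apply_of_ne_of_ne hyx hygm,
        mem_supportedIn.1 hg y hyR]
    calc ρ g (ρ (swap x m) w) = ρ (swap x (g m) * (swap x (g m) * g * swap x m)) w := by
          rw [mul_assoc (swap x (g m)) g, swap_mul_self_mul, map_mul, Module.End.mul_apply]
      _ = ρ (swap x (g m)) w := by
          rw [map_mul, Module.End.mul_apply, mem_fixedVectors.1 hw _ hfix]
  calc ρ g (starSum ρ (insert x R) x w)
      = ∑ m ∈ insert x R, ρ (swap x (g m)) w := by
        rw [starSum_apply, map_sum, Finset.sum_congr rfl hmove]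
    _ = ∑ m ∈ (insert x R).map g.toEmbedding, ρ (swap x m) w := by rw [Finset.sum_map]; rfl
    _ = starSum ρ (insert x R) x w := by rw [map_eq_of_mem_supportedIn hg, starSum_apply]

lemma starSum_of_mem_fixedVectors (hx : x ∈ R) (hw : w ∈ fixedVectors ρ R) :
    starSum ρ R x w = (R.card : k) • w := by
  rw [starSum_apply,
    Finset.sum_congr rfl fun m hm => mem_fixedVectors.1 hw _ (swap_mem_supportedIn hx hm),
    Finset.sum_const, Nat.cast_smul_eq_nsmul]

lemma starSum_insert_swap (hx : x ∉ R) (hz : z ∉ R) (w : V) :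
    starSum ρ (insert x R) x (ρ (swap x z) w) = ρ (swap x z) (starSum ρ (insert z R) z w) := by
  have hmap : R.map (swap x z).toEmbedding = R :=
    Finset.map_eq_of_subset (Finset.map_subset_iff_subset_preimage.2 fun y hy => by
      simpa [swap_apply_of_ne_of_ne (ne_of_mem_of_not_mem hy hx) (ne_of_mem_of_not_mem hy hz)]
        using hy)
  simp only [apply_starSum, Finset.map_insert, hmap, Equiv.coe_toEmbedding, swap_apply_right]

lemma starSum_insert_starSum (hw : w ∈ fixedVectors ρ R) (hRS : insert x R ⊆ S)
    (hx : x ∉ R) (hz : ∀ z ∈ S \ insert x R, starSum ρ (insert z R) z w = 0) :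
    starSum ρ (insert x R) x (starSum ρ S x w)
      = ((insert x R).card : k) • starSum ρ (insert x R) x w := by
  have hout : starSum ρ (insert x R) x (starSum ρ (S \ insert x R) x w) = 0 := by
    rw [starSum_apply ρ (S \ insert x R), map_sum]
    refine Finset.sum_eq_zero fun z hzm => ?_
    have hzR : z ∉ R := fun h => (Finset.mem_sdiff.1 hzm).2 (Finset.mem_insert_of_mem h)
    rw [starSum_insert_swap hx hzR, hz z hzm, map_zero]
  rw [← starSum_sdiff_add hRS, LinearMap.add_apply, map_add, hout, zero_add,
    starSum_of_mem_fixedVectors (Finset.mem_insert_self x R) (starSum_mem_fixedVectors_insert hw)]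

/- By maximality: `starSum ρ (insert z R) z w` lies in `W` and is fixed by the permutations of one
more letter. -/
lemma exists_fixed_of_ne_bot (hW : IsStableOn ρ S W) (hne : W ≠ ⊥) :
    ∃ R ⊆ S, R.card = fixity ρ W S ∧ ∃ w ∈ W, w ∈ fixedVectors ρ R ∧ w ≠ 0 ∧
      ∀ z ∈ S \ R, starSum ρ (insert z R) z w = 0 := by
  obtain ⟨R, hRS, hcard, w, hwW, hwR, hw⟩ := exists_card_eq_fixity ρ hne S
  refine ⟨R, hRS, hcard, w, hwW, hwR, hw, fun z hz => ?_⟩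
  obtain ⟨hzS, hzR⟩ := Finset.mem_sdiff.1 hz
  have hsub : insert z R ⊆ S := Finset.insert_subset hzS hRS
  by_contra h0
  have hle := card_le_fixity hsub (hW.starSum_mem hsub hzS hwW)
    (starSum_mem_fixedVectors_insert hwR) h0
  rw [Finset.card_insert_of_notMem hzR, ← hcard] at hle
  exact absurd hle (Nat.not_succ_le_self _)

end Representation

open scoped RealInnerProductSpace

section Spectral

variable {E : Type*} [NormedAddCommGroup E] [InnerProductSpace ℝ E]

lemma inner_map_self_eq_sum {ι : Type*} [Fintype ι] (u : OrthonormalBasis ι ℝ E) {X : E →ₗ[ℝ] E}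
    {e : ι → ℝ} (hu : ∀ i, X (u i) = e i • u i) (v : E) :
    ⟪X v, v⟫ = ∑ i, e i * ⟪u i, v⟫ ^ 2 := by
  have hXv : X v = ∑ i, ⟪u i, v⟫ • e i • u i := by
    conv_lhs => rw [← u.sum_repr' v]
    simp only [map_sum, map_smul, hu]
  rw [hXv, sum_inner]
  refine Finset.sum_congr rfl fun i _ => ?_
  rw [real_inner_smul_left, real_inner_smul_left]
  ring

variable [FiniteDimensional ℝ E] {X : E →ₗ[ℝ] E} {W : Submodule ℝ E}

lemma exists_inf_eigenspace_ne_bot (hX : X.IsSymmetric) (hW : ∀ v ∈ W, X v ∈ W) (hne : W ≠ ⊥) :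
    ∃ μ : ℝ, W ⊓ Module.End.eigenspace X μ ≠ ⊥ := by
  have : Nontrivial W := Submodule.nontrivial_iff_ne_bot.2 hne
  have hY : (X.restrict hW).IsSymmetric := hX.restrict_invariant hW
  obtain ⟨v, hv⟩ :=
    (hY.hasEigenvalue_eigenvalues rfl ⟨0, Module.finrank_pos⟩).exists_hasEigenvector
  exact ⟨hY.eigenvalues rfl ⟨0, Module.finrank_pos⟩, (Submodule.ne_bot_iff _).2
    ⟨v, ⟨v.2, Module.End.mem_eigenspace_iff.2 (congrArg Subtype.val hv.apply_eq_smul)⟩,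
      fun h => hv.2 (Subtype.ext h)⟩⟩

lemma inner_map_self_le_of_eigenvalue_le (hX : X.IsSymmetric) (hW : ∀ v ∈ W, X v ∈ W) {c : ℝ}
    (h : ∀ μ, W ⊓ Module.End.eigenspace X μ ≠ ⊥ → μ ≤ c) {v : E} (hv : v ∈ W) :
    ⟪X v, v⟫ ≤ c * ⟪v, v⟫ := by
  have hY : (X.restrict hW).IsSymmetric := hX.restrict_invariant hW
  set u := hY.eigenvectorBasis rfl
  set e := hY.eigenvalues rfl
  have hu : ∀ i, X.restrict hW (u i) = e i • u i := hY.apply_eigenvectorBasis rfl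
  have he : ∀ i, e i ≤ c := fun i => h _ <| (Submodule.ne_bot_iff _).2
    ⟨u i, ⟨(u i).2, Module.End.mem_eigenspace_iff.2 (congrArg Subtype.val (hu i))⟩,
      fun h0 => u.toBasis.ne_zero i (by simpa using h0)⟩
  calc ⟪X v, v⟫ = ⟪X.restrict hW ⟨v, hv⟩, (⟨v, hv⟩ : W)⟫ := rfl
    _ = ∑ i, e i * ⟪u i, (⟨v, hv⟩ : W)⟫ ^ 2 := inner_map_self_eq_sum u hu _
    _ ≤ ∑ i, c * ⟪u i, (⟨v, hv⟩ : W)⟫ ^ 2 := by gcongr with i; exact he i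
    _ = c * ⟪(⟨v, hv⟩ : W), (⟨v, hv⟩ : W)⟫ := by
        rw [← Finset.mul_sum, u.sum_sq_inner_right, real_inner_self_eq_norm_sq]
    _ = c * ⟪v, v⟫ := rfl

end Spectral

section Orthogonal

variable {G E : Type*} [Group G] [NormedAddCommGroup E] [InnerProductSpace ℝ E]

/-- `ρ` acts by isometries of the inner product. -/
def IsOrthogonal (ρ : Representation ℝ G E) : Prop :=
  ∀ g v w, ⟪ρ g v, ρ g w⟫ = ⟪v, w⟫

variable {ρ : Representation ℝ G E}

lemma IsOrthogonal.inner_apply (hρ : IsOrthogonal ρ) (g : G) (v w : E) :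
    ⟪ρ g v, w⟫ = ⟪v, ρ g⁻¹ w⟫ := by
  rw [← hρ g⁻¹, Representation.inv_self_apply]

lemma IsOrthogonal.norm_apply (hρ : IsOrthogonal ρ) (g : G) (v : E) : ‖ρ g v‖ = ‖v‖ := by
  rw [@norm_eq_sqrt_real_inner _ _ _ (ρ g v), hρ, ← norm_eq_sqrt_real_inner]

lemma IsOrthogonal.abs_inner_apply_le (hρ : IsOrthogonal ρ) (g : G) (v : E) :
    |⟪ρ g v, v⟫| ≤ ⟪v, v⟫ := by
  refine (abs_real_inner_le_norm _ _).trans_eq ?_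
  rw [hρ.norm_apply, real_inner_self_eq_norm_mul_norm]

end Orthogonal

section Octopus

variable {α E : Type*} [DecidableEq α] [NormedAddCommGroup E] [InnerProductSpace ℝ E]
  {ρ : Representation ℝ (Perm α) E} {R S : Finset α} {W : Submodule ℝ E} {x : α} {v w : E}

lemma IsOrthogonal.swap_isSymmetric (hρ : IsOrthogonal ρ) (x y : α) :
    (ρ (swap x y)).IsSymmetric := fun v w => by
  rw [hρ.inner_apply, swap_inv]

lemma IsOrthogonal.starSum_isSymmetric (hρ : IsOrthogonal ρ) (S : Finset α) (x : α) :
    (starSum ρ S x).IsSymmetric := fun v w => by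
  simp only [starSum_apply, sum_inner, inner_sum, hρ.swap_isSymmetric _ _ v w]

lemma IsOrthogonal.pairSum_isSymmetric (hρ : IsOrthogonal ρ) (S : Finset α) :
    (pairSum ρ S).IsSymmetric := fun v w => by
  simp only [pairSum_apply, sum_inner, inner_sum, hρ.starSum_isSymmetric _ _ v w]

lemma inner_starSum (S : Finset α) (x : α) (v : E) :
    ⟪starSum ρ S x v, v⟫ = ∑ y ∈ S, ⟪ρ (swap x y) v, v⟫ := by
  rw [starSum_apply, sum_inner]

lemma inner_pairSum (S : Finset α) (v : E) :
    ⟪pairSum ρ S v, v⟫ = ∑ x ∈ S, ⟪starSum ρ S x v, v⟫ := by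
  rw [pairSum_apply, sum_inner]

-- `starSum ρ (insert x R) x` acts on its own value at `w` as the scalar `(insert x R).card`.
lemma inner_starSum_insert_nonneg (hρ : IsOrthogonal ρ) (hw : w ∈ fixedVectors ρ R) :
    0 ≤ ⟪starSum ρ (insert x R) x w, w⟫ := by
  set u := starSum ρ (insert x R) x w
  have hcard : (0 : ℝ) < (insert x R).card := by
    exact_mod_cast Finset.card_pos.2 ⟨x, Finset.mem_insert_self x R⟩
  have hsq : ((insert x R).card : ℝ) * ⟪u, w⟫ = ⟪u, u⟫ := by
    rw [← real_inner_smul_left, ← starSum_of_mem_fixedVectors (Finset.mem_insert_self x R)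
      (starSum_mem_fixedVectors_insert hw), hρ.starSum_isSymmetric]
  exact nonneg_of_mul_nonneg_right (hsq ▸ real_inner_self_nonneg) hcard

lemma eigenvalue_le_of_starSum_insert_eq_zero (hRS : R ⊆ S) (hx : x ∉ R) (hw : w ≠ 0) {μ : ℝ}
    (hμ : starSum ρ S x w = μ • w) (h0 : starSum ρ (insert x R) x w = 0) {r : ℝ}
    (hr : ⟪starSum ρ (S \ R) x w, w⟫ ≤ r * ⟪w, w⟫) : μ ≤ r := by
  have hout : starSum ρ (S \ R) x w = (μ + 1) • w := by
    rw [starSum_insert_self hx, LinearMap.add_apply, Module.End.one_apply] at h0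
    rw [← starSum_sdiff_add hRS, LinearMap.add_apply, eq_neg_of_add_eq_zero_right h0] at hμ
    rw [add_smul, one_smul, ← hμ, neg_add_cancel_right]
  rw [hout, real_inner_smul_left] at hr
  linarith [le_of_mul_le_mul_right hr (real_inner_self_pos.2 hw)]

lemma starSum_eigenvalue_le_fixity
    (ih : ∀ T ⊂ S, ∀ x ∈ T, ∀ w ∈ W, ⟪starSum ρ T x w, w⟫ ≤ fixity ρ W T * ⟪w, w⟫)
    (hx : x ∈ S) (hW : IsStableOn ρ S W) {μ : ℝ}
    (hμ : W ⊓ Module.End.eigenspace (starSum ρ S x) μ ≠ ⊥) : μ ≤ fixity ρ W S := by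
  have hstable : IsStableOn ρ (S.erase x) (W ⊓ Module.End.eigenspace (starSum ρ S x) μ) :=
    (hW.mono (Finset.erase_subset x S)).inf_eigenspace (fun g hg => apply_starSum_of_fixes
      (supportedIn_mono (Finset.erase_subset x S) hg)
      (mem_supportedIn.1 hg x (Finset.notMem_erase x S))) μ
  obtain ⟨R, hR, -, w, ⟨hwW, hwμ⟩, hwR, hw, hmax⟩ := exists_fixed_of_ne_bot hstable hμ
  rw [SetLike.mem_coe, Module.End.mem_eigenspace_iff] at hwμ
  have hxR : x ∉ R := fun h => Finset.notMem_erase x S (hR h)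
  have hRS : R ⊆ S := hR.trans (Finset.erase_subset x S)
  have hinsert : insert x R ⊆ S := Finset.insert_subset hx hRS
  by_cases h0 : starSum ρ (insert x R) x w = 0
  · have hRne : R.Nonempty := by
      refine Finset.nonempty_iff_ne_empty.2 fun hempty => hw ?_
      simpa [hempty, starSum, ← Perm.one_def] using h0
    have hih := ih (S \ R) (Finset.sdiff_ssubset hRS hRne) x (Finset.mem_sdiff.2 ⟨hx, hxR⟩) w hwW
    refine (eigenvalue_le_of_starSum_insert_eq_zero hRS hxR hw hwμ h0 hih).trans ?_
    exact_mod_cast fixity_mono le_rfl Finset.sdiff_subset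
  · have hcard : μ = (insert x R).card := by
      have h := starSum_insert_starSum hwR hinsert hxR fun z hz =>
        hmax z (by simp only [Finset.mem_sdiff, Finset.mem_insert, Finset.mem_erase] at hz ⊢; tauto)
      rw [hwμ, map_smul] at h
      exact smul_left_injective ℝ h0 h
    rw [hcard]
    exact_mod_cast card_le_fixity hinsert (hW.starSum_mem hinsert hx hwW)
      (starSum_mem_fixedVectors_insert hwR) h0

variable [FiniteDimensional ℝ E]

theorem inner_starSum_le (hρ : IsOrthogonal ρ) (hx : x ∈ S) (hW : IsStableOn ρ S W) (hv : v ∈ W) :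
    ⟪starSum ρ S x v, v⟫ ≤ fixity ρ W S * ⟪v, v⟫ := by
  induction S using Finset.strongInduction generalizing x v with
  | H S ih =>
    exact inner_map_self_le_of_eigenvalue_le (hρ.starSum_isSymmetric S x)
      (fun _ => hW.starSum_mem subset_rfl hx)
      (fun _ => starSum_eigenvalue_le_fixity
        (fun T hT _ hy _ hw => ih T hT hy (hW.mono hT.subset) hw) hx hW) hv

lemma inner_pairSum_le_fixity (hρ : IsOrthogonal ρ) (hW : IsStableOn ρ S W) (hv : v ∈ W) :
    ⟪pairSum ρ S v, v⟫ ≤ S.card * fixity ρ W S * ⟪v, v⟫ := by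
  rw [inner_pairSum, mul_assoc, ← nsmul_eq_mul]
  exact Finset.sum_le_card_nsmul _ _ _ fun x hx => inner_starSum_le hρ hx hW hv

end Octopus

section PairSum

lemma sum_sum_union_of_symm {α M : Type*} [DecidableEq α] [CommSemiring M] {S T : Finset α}
    (h : Disjoint S T) {f : α → α → M} (hf : ∀ x y, f x y = f y x) :
    ∑ x ∈ S ∪ T, ∑ y ∈ S ∪ T, f x y
      = ∑ x ∈ S, ∑ y ∈ S, f x y + 2 * ∑ x ∈ T, ∑ y ∈ S, f x y + ∑ x ∈ T, ∑ y ∈ T, f x y := by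
  have hcross : ∑ x ∈ S, ∑ y ∈ T, f x y = ∑ x ∈ T, ∑ y ∈ S, f x y := by
    rw [Finset.sum_comm]
    simp only [hf]
  simp only [Finset.sum_union h, Finset.sum_add_distrib, hcross]
  ring

variable {α E : Type*} [DecidableEq α] [NormedAddCommGroup E] [InnerProductSpace ℝ E]
  {ρ : Representation ℝ (Perm α) E} {R S : Finset α} {W : Submodule ℝ E} {x : α} {v w : E}

lemma inner_pairSum_eq_sum (S : Finset α) (v : E) :
    ⟪pairSum ρ S v, v⟫ = ∑ x ∈ S, ∑ y ∈ S, ⟪ρ (swap x y) v, v⟫ := by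
  simp only [inner_pairSum, inner_starSum]

lemma inner_swap_self (x : α) (v : E) : ⟪ρ (swap x x) v, v⟫ = ⟪v, v⟫ := by
  rw [swap_self, ← Perm.one_def, map_one, Module.End.one_apply]

lemma inner_starSum_insert_self (hx : x ∉ R) (v : E) :
    ⟪starSum ρ (insert x R) x v, v⟫ = ⟪v, v⟫ + ⟪starSum ρ R x v, v⟫ := by
  rw [starSum_insert_self hx, LinearMap.add_apply, inner_add_left, Module.End.one_apply]

lemma inner_pairSum_insert (hx : x ∉ S) (v : E) :
    ⟪pairSum ρ (insert x S) v, v⟫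
      = ⟪v, v⟫ + 2 * ⟪starSum ρ S x v, v⟫ + ⟪pairSum ρ S v, v⟫ := by
  rw [Finset.insert_eq, Finset.union_comm, inner_pairSum_eq_sum, inner_pairSum_eq_sum,
    inner_starSum, sum_sum_union_of_symm (Finset.disjoint_singleton_right.2 hx)
      fun _ _ => by rw [swap_comm]]
  simp only [Finset.sum_singleton, inner_swap_self]
  ring

lemma inner_pairSum_of_mem_fixedVectors (hRS : R ⊆ S) (hw : w ∈ fixedVectors ρ R) :
    ⟪pairSum ρ S w, w⟫ = (R.card : ℝ) ^ 2 * ⟪w, w⟫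
      + 2 * ∑ z ∈ S \ R, (⟪starSum ρ (insert z R) z w, w⟫ - ⟪w, w⟫)
      + ⟪pairSum ρ (S \ R) w, w⟫ := by
  have hinner : ∑ x ∈ R, ∑ y ∈ R, ⟪ρ (swap x y) w, w⟫ = (R.card : ℝ) ^ 2 * ⟪w, w⟫ := by
    rw [Finset.sum_congr rfl fun x hx => Finset.sum_congr rfl fun y hy => by
      rw [mem_fixedVectors.1 hw _ (swap_mem_supportedIn hx hy)]]
    simp only [Finset.sum_const, nsmul_eq_mul]
    ring
  have hcross : ∀ z ∈ S \ R, ∑ y ∈ R, ⟪ρ (swap z y) w, w⟫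
      = ⟪starSum ρ (insert z R) z w, w⟫ - ⟪w, w⟫ := fun z hz => by
    rw [inner_starSum_insert_self (Finset.mem_sdiff.1 hz).2, inner_starSum, add_sub_cancel_left]
  rw [inner_pairSum_eq_sum, inner_pairSum_eq_sum, ← Finset.union_sdiff_of_subset hRS,
    sum_sum_union_of_symm Finset.disjoint_sdiff fun _ _ => by rw [swap_comm],
    Finset.union_sdiff_of_subset hRS, hinner, Finset.sum_congr rfl hcross]

lemma inner_pairSum_le_card_sq (hρ : IsOrthogonal ρ) (S : Finset α) (v : E) :
    ⟪pairSum ρ S v, v⟫ ≤ (S.card : ℝ) ^ 2 * ⟪v, v⟫ := by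
  calc ⟪pairSum ρ S v, v⟫ = ∑ x ∈ S, ∑ y ∈ S, ⟪ρ (swap x y) v, v⟫ := inner_pairSum_eq_sum S v
    _ ≤ ∑ _x ∈ S, ∑ _y ∈ S, ⟪v, v⟫ := by
        gcongr with x _ y _
        exact (abs_le.1 (hρ.abs_inner_apply_le _ v)).2
    _ = (S.card : ℝ) ^ 2 * ⟪v, v⟫ := by simp only [Finset.sum_const, nsmul_eq_mul]; ring

lemma le_inner_pairSum (hρ : IsOrthogonal ρ) (S : Finset α) (v : E) :
    (2 * S.card - (S.card : ℝ) ^ 2) * ⟪v, v⟫ ≤ ⟪pairSum ρ S v, v⟫ := by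
  have hterm : ∀ x y, (if x = y then 2 * ⟪v, v⟫ else 0) - ⟪v, v⟫ ≤ ⟪ρ (swap x y) v, v⟫ := by
    intro x y
    split_ifs with hxy
    · rw [hxy, inner_swap_self]; linarith
    · linarith [(abs_le.1 (hρ.abs_inner_apply_le (swap x y) v)).1]
  calc (2 * S.card - (S.card : ℝ) ^ 2) * ⟪v, v⟫
      = ∑ x ∈ S, ∑ y ∈ S, ((if x = y then 2 * ⟪v, v⟫ else 0) - ⟪v, v⟫) := by
        simp only [Finset.sum_sub_distrib, Finset.sum_ite_eq, Finset.sum_const, nsmul_eq_mul,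
          Finset.sum_ite_mem, Finset.inter_self]
        ring
    _ ≤ ⟪pairSum ρ S v, v⟫ := by
        rw [inner_pairSum_eq_sum]
        exact Finset.sum_le_sum fun x _ => Finset.sum_le_sum fun y _ => hterm x y

lemma le_inner_pairSum_of_mem_fixedVectors (hρ : IsOrthogonal ρ) (hRS : R ⊆ S)
    (hw : w ∈ fixedVectors ρ R) :
    (S.card : ℝ) * (2 * R.card - S.card) * ⟪w, w⟫ ≤ ⟪pairSum ρ S w, w⟫ := by
  have hcross : ∑ _z ∈ S \ R, -⟪w, w⟫
      ≤ ∑ z ∈ S \ R, (⟪starSum ρ (insert z R) z w, w⟫ - ⟪w, w⟫) := by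
    gcongr with z _
    linarith [inner_starSum_insert_nonneg (x := z) hρ hw]
  have hout := le_inner_pairSum hρ (S \ R) w
  rw [inner_pairSum_of_mem_fixedVectors hRS hw]
  rw [Finset.sum_const, nsmul_eq_mul] at hcross
  rw [Finset.cast_card_sdiff hRS] at hcross hout
  linarith

lemma le_eigenvalue_pairSum (hρ : IsOrthogonal ρ) {τ : ℝ}
    (hτ : Module.End.eigenspace (pairSum ρ S) τ ≠ ⊥) :
    (S.card : ℝ) * (2 * fixity ρ (Module.End.eigenspace (pairSum ρ S) τ) S - S.card) ≤ τ := by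
  obtain ⟨R, hRS, hcard, w, hwτ, hwR, hw⟩ := exists_card_eq_fixity ρ hτ S
  have h := le_inner_pairSum_of_mem_fixedVectors hρ hRS hwR
  rw [Module.End.mem_eigenspace_iff.1 hwτ, real_inner_smul_left, hcard] at h
  exact le_of_mul_le_mul_right h (real_inner_self_pos.2 hw)

variable [FiniteDimensional ℝ E]

/-- The star sum commutes with the pair sum, so it suffices to look at a joint eigenvector, lying
in the `τ`-eigenspace of the pair sum, say; the fixity of that eigenspace bounds the star sum from
above and `τ` from below. -/
theorem octopus_inequality (hρ : IsOrthogonal ρ) (hx : x ∈ S) (v : E) :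
    2 * S.card * ⟪starSum ρ S x v, v⟫ - ⟪pairSum ρ S v, v⟫ ≤ (S.card : ℝ) ^ 2 * ⟪v, v⟫ := by
  set X : Module.End ℝ E := (2 * S.card : ℝ) • starSum ρ S x - pairSum ρ S with hX
  have hXinner : ∀ u, ⟪X u, u⟫
      = 2 * S.card * ⟪starSum ρ S x u, u⟫ - ⟪pairSum ρ S u, u⟫ := fun u => by
    rw [hX, LinearMap.sub_apply, LinearMap.smul_apply, inner_sub_left, real_inner_smul_left]
  have hXsymm : X.IsSymmetric := .sub (.smul (by simp) (hρ.starSum_isSymmetric S x))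
    (hρ.pairSum_isSymmetric S)
  rw [← hXinner]
  refine inner_map_self_le_of_eigenvalue_le hXsymm (W := ⊤) (fun _ _ => Submodule.mem_top)
    (fun ξ hξ => ?_) Submodule.mem_top
  have hcomm : ∀ u ∈ ⊤ ⊓ Module.End.eigenspace X ξ,
      pairSum ρ S u ∈ ⊤ ⊓ Module.End.eigenspace X ξ := by
    rintro u ⟨-, hu⟩
    refine ⟨Submodule.mem_top, ?_⟩
    rw [SetLike.mem_coe, Module.End.mem_eigenspace_iff] at hu ⊢
    rw [← map_smul, ← hu, hX]
    simp only [LinearMap.sub_apply, LinearMap.smul_apply, map_sub, map_smul,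
      starSum_pairSum_comm hx]
  obtain ⟨τ, hτ⟩ := exists_inf_eigenspace_ne_bot (hρ.pairSum_isSymmetric S) hcomm hξ
  obtain ⟨u, ⟨⟨-, huX⟩, huτ⟩, hu⟩ := Submodule.exists_mem_ne_zero_of_ne_bot hτ
  rw [SetLike.mem_coe, Module.End.mem_eigenspace_iff] at huX
  have hstable : IsStableOn ρ S (Module.End.eigenspace (pairSum ρ S) τ) := by
    simpa using isStableOn_top.inf_eigenspace
      (fun g hg => apply_pairSum_of_mem_supportedIn hg) τ
  have hstar := inner_starSum_le hρ hx hstable huτ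
  have hpair := le_eigenvalue_pairSum hρ ((Submodule.ne_bot_iff _).2 ⟨u, huτ, hu⟩)
  have hjoint := hXinner u
  rw [huX, Module.End.mem_eigenspace_iff.1 huτ, real_inner_smul_left, real_inner_smul_left]
    at hjoint
  have hpos : 0 < ⟪u, u⟫ := real_inner_self_pos.2 hu
  refine le_of_mul_le_mul_right (hjoint.trans_le ?_) hpos
  have hstar' := mul_le_mul_of_nonneg_left hstar (by positivity : (0 : ℝ) ≤ 2 * S.card)
  have hpair' := mul_le_mul_of_nonneg_right hpair hpos.le
  linarith

lemma octopus_inequality_of_notMem (hρ : IsOrthogonal ρ) (hx : x ∉ S) (v : E) :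
    2 * S.card * ⟪starSum ρ S x v, v⟫ - ⟪pairSum ρ S v, v⟫ ≤ (S.card : ℝ) ^ 2 * ⟪v, v⟫ := by
  have h := octopus_inequality hρ (Finset.mem_insert_self x S) v
  rw [inner_starSum_insert_self hx, inner_pairSum_insert hx, Finset.card_insert_of_notMem hx] at h
  push_cast at h
  linarith

lemma sum_octopus_inequality {A B : Finset α} (hρ : IsOrthogonal ρ) (h : Disjoint A B) (v : E) :
    2 * B.card * ∑ x ∈ A, ⟪starSum ρ B x v, v⟫ - A.card * ⟪pairSum ρ B v, v⟫
      ≤ A.card * ((B.card : ℝ) ^ 2 * ⟪v, v⟫) := by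
  rw [Finset.mul_sum, ← nsmul_eq_mul, ← nsmul_eq_mul, ← Finset.sum_const, ← Finset.sum_const,
    ← Finset.sum_sub_distrib]
  exact Finset.sum_le_sum fun x hx =>
    octopus_inequality_of_notMem hρ (Finset.disjoint_left.1 h hx) v

lemma eigenvalue_pairSum_le (hρ : IsOrthogonal ρ) (hW : IsStableOn ρ S W) {μ : ℝ}
    (hμ : W ⊓ Module.End.eigenspace (pairSum ρ S) μ ≠ ⊥) :
    ∃ r ≤ fixity ρ W S, r ≤ S.card ∧ μ ≤ S.card * r ∧
      μ ≤ (r : ℝ) ^ 2 - 2 * (S.card - r) + (S.card - r) ^ 2 := by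
  have hstable := hW.inf_eigenspace (fun g hg => apply_pairSum_of_mem_supportedIn hg) μ
  obtain ⟨R, hRS, hcard, w, hwF, hwR, hw, hmax⟩ := exists_fixed_of_ne_bot hstable hμ
  have hwμ := Module.End.mem_eigenspace_iff.1 hwF.2
  have hpos : 0 < ⟪w, w⟫ := real_inner_self_pos.2 hw
  refine ⟨R.card, hcard ▸ fixity_mono inf_le_left subset_rfl, Finset.card_le_card hRS, ?_, ?_⟩
  · refine le_of_mul_le_mul_right ?_ hpos
    have h := inner_pairSum_le_fixity hρ hstable hwF
    rwa [hwμ, real_inner_smul_left, ← hcard] at h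
  · have hzero : ∀ z ∈ S \ R, ⟪starSum ρ (insert z R) z w, w⟫ - ⟪w, w⟫ = -⟪w, w⟫ := fun z hz => by
      rw [hmax z hz, inner_zero_left, zero_sub]
    have hout := inner_pairSum_le_card_sq hρ (S \ R) w
    have hsplit := inner_pairSum_of_mem_fixedVectors hRS hwR
    rw [Finset.sum_congr rfl hzero, Finset.sum_const, nsmul_eq_mul, hwμ, real_inner_smul_left,
      Finset.cast_card_sdiff hRS] at hsplit
    rw [Finset.cast_card_sdiff hRS] at hout
    refine le_of_mul_le_mul_right ?_ hpos
    linarith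

-- With `n = S.card` and `r = n - j`, the second bound of `eigenvalue_pairSum_le` is
-- `n² - 2j(n - j + 1)`, which decreases in `j` up to `(n + 1) / 2`. Beyond that point the first
-- bound is at most `n² / 2 - n`, the minimum of `n² - 2k(n - k + 1)` over `2k ≤ n`.
lemma inner_pairSum_le_of_fixity_le (hρ : IsOrthogonal ρ) (hW : IsStableOn ρ S W) {k : ℕ}
    (hk : 2 * k ≤ S.card) (hfix : fixity ρ W S ≤ S.card - k) (hv : v ∈ W) :
    ⟪pairSum ρ S v, v⟫ ≤ ((S.card : ℝ) ^ 2 - 2 * k * (S.card - k + 1)) * ⟪v, v⟫ := by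
  refine inner_map_self_le_of_eigenvalue_le (hρ.pairSum_isSymmetric S)
    (fun _ => hW.pairSum_mem) (fun μ hμ => ?_) hv
  obtain ⟨r, hrfix, hrS, hlow, hhigh⟩ := eigenvalue_pairSum_le hρ hW hμ
  obtain ⟨j, hj⟩ := Nat.exists_eq_add_of_le hrS
  have hkj : (k : ℝ) ≤ j := by exact_mod_cast (by lia : k ≤ j)
  have hk' : 2 * (k : ℝ) ≤ S.card := by exact_mod_cast hk
  have hr : (r : ℝ) = S.card - j := by rw [hj]; push_cast; ring
  rw [hr] at hlow hhigh
  rcases le_or_gt (2 * j) (S.card + 1) with hjS | hjS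
  · have hjS' : 2 * (j : ℝ) ≤ S.card + 1 := by exact_mod_cast hjS
    nlinarith [mul_nonneg (sub_nonneg.2 hkj) (by linarith : 0 ≤ (S.card : ℝ) + 1 - j - k)]
  · have hjS' : (S.card : ℝ) + 2 ≤ 2 * j := by exact_mod_cast hjS
    nlinarith [Nat.cast_nonneg (α := ℝ) S.card]

end PairSum

section Bias

variable {α E : Type*} [Fintype α] [DecidableEq α] [NormedAddCommGroup E] [InnerProductSpace ℝ E]
  {ρ : Representation ℝ (Perm α) E} {A : Finset α} {a b : ℝ}

/-- The sum of `w i * w j` times the transposition `(i j)` over all ordered pairs `(i, j)`, the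
pairs with `i = j` contributing multiples of the identity. -/
def weightedSwapSum (ρ : Representation ℝ (Perm α) E) (w : α → ℝ) : Module.End ℝ E :=
  ∑ i, ∑ j, (w i * w j) • ρ (swap i j)

/-- The letter weights of the biased shuffle: `a` on `A` and `b` off `A`. -/
def weight (a b : ℝ) (A : Finset α) (i : α) : ℝ :=
  if i ∈ A then a else b

lemma inner_weightedSwapSum (a b : ℝ) (A : Finset α) (v : E) :
    ⟪weightedSwapSum ρ (weight a b A) v, v⟫ = a ^ 2 * ⟪pairSum ρ A v, v⟫
      + 2 * (a * b) * ∑ x ∈ A, ⟪starSum ρ Aᶜ x v, v⟫ + b ^ 2 * ⟪pairSum ρ Aᶜ v, v⟫ := by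
  have hA : ∀ i ∈ A, weight a b A i = a := fun i hi => if_pos hi
  have hB : ∀ i ∈ Aᶜ, weight a b A i = b := fun i hi => if_neg (Finset.mem_compl.1 hi)
  have hblock : ∀ S T : Finset α, ∀ s t : ℝ, (∀ i ∈ S, weight a b A i = s) →
      (∀ i ∈ T, weight a b A i = t) → ∑ i ∈ S, ∑ j ∈ T,
        weight a b A i * weight a b A j * ⟪ρ (swap i j) v, v⟫
      = s * t * ∑ i ∈ S, ⟪starSum ρ T i v, v⟫ := by
    intro S T s t hS hT
    simp only [inner_starSum, Finset.mul_sum]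
    exact Finset.sum_congr rfl fun i hi => Finset.sum_congr rfl fun j hj => by rw [hS i hi, hT j hj]
  simp only [weightedSwapSum, LinearMap.sum_apply, LinearMap.smul_apply, sum_inner,
    real_inner_smul_left]
  rw [← Finset.union_compl A, Finset.union_comm,
    sum_sum_union_of_symm disjoint_compl_left fun x y => by
      rw [swap_comm, mul_comm (weight a b A x)],
    hblock _ _ b b hB hB, hblock _ _ a b hA hB, hblock _ _ a a hA hA, inner_pairSum, inner_pairSum]
  ring

lemma inner_pairSum_univ (A : Finset α) (v : E) :
    ⟪pairSum ρ Finset.univ v, v⟫ = ⟪pairSum ρ A v, v⟫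
      + 2 * ∑ x ∈ A, ⟪starSum ρ Aᶜ x v, v⟫ + ⟪pairSum ρ Aᶜ v, v⟫ := by
  have h : weightedSwapSum ρ (weight 1 1 A) = pairSum ρ Finset.univ := by
    simp only [weightedSwapSum, weight, ite_self, mul_one, one_smul, pairSum, starSum]
  rw [← h, inner_weightedSwapSum]
  ring

variable [FiniteDimensional ℝ E]

theorem inner_weightedSwapSum_le (hρ : IsOrthogonal ρ) (hb : 0 ≤ b) (hba : b ≤ a)
    (hab : a + b = 2) (hA : 2 * A.card = Fintype.card α) (v : E) :
    ⟪weightedSwapSum ρ (weight a b A) v, v⟫ ≤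
      b * ⟪pairSum ρ Finset.univ v, v⟫ + (1 - b) * (Fintype.card α : ℝ) ^ 2 * ⟪v, v⟫ := by
  have hcompl : Aᶜ.card = A.card := by rw [Finset.card_compl]; lia
  have hcard : (Fintype.card α : ℝ) = 2 * A.card := by rw [← hA]; push_cast; rfl
  have hcross : 2 * ∑ x ∈ A, ⟪starSum ρ Aᶜ x v, v⟫ - ⟪pairSum ρ Aᶜ v, v⟫
      ≤ (A.card : ℝ) ^ 2 * ⟪v, v⟫ := by
    rcases A.card.eq_zero_or_pos with h0 | hpos
    · rw [Finset.card_eq_zero.1 (hcompl.trans h0), Finset.card_eq_zero.1 h0]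
      simp [pairSum]
    · have h := sum_octopus_inequality hρ (disjoint_compl_right (a := A)) v
      rw [hcompl] at h
      refine le_of_mul_le_mul_left ?_ (Nat.cast_pos (α := ℝ).2 hpos)
      linarith
  rw [inner_weightedSwapSum, inner_pairSum_univ A, hcard]
  obtain rfl : a = 2 - b := by linarith
  have h1 := mul_le_mul_of_nonneg_left (inner_pairSum_le_card_sq hρ A v)
    (by nlinarith : 0 ≤ (2 - b) ^ 2 - b)
  have h2 := mul_le_mul_of_nonneg_left hcross
    (mul_nonneg hb (by linarith) : 0 ≤ b * (1 - b))
  linarith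

end Bias

section LowDegree

variable {k V α : Type*} [CommRing k] [AddCommGroup V] [Module k V]

lemma apply_mem_fixedVectors_map {ρ : Representation k (Perm α) V} {R : Finset α} {v : V}
    (g : Perm α) (hv : v ∈ fixedVectors ρ R) : ρ g v ∈ fixedVectors ρ (R.map g.toEmbedding) := by
  refine mem_fixedVectors.2 fun h hh => ?_
  have hconj : g⁻¹ * h * g ∈ supportedIn R := mem_supportedIn.2 fun y hy => by
    have : h (g y) = g y := mem_supportedIn.1 hh _ (by simpa using hy)
    simp [this]
  calc ρ h (ρ g v) = ρ g (ρ (g⁻¹ * h * g) v) := by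
        simp only [← Module.End.mul_apply, ← map_mul, mul_assoc, mul_inv_cancel_left]
    _ = ρ g v := by rw [mem_fixedVectors.1 hv _ hconj]

variable [Fintype α]

/-- The span of the vectors fixed by all permutations of some `card α - j` letters. In the regular
representation these are the functions of degree at most `j`, i.e. the isotypic components of the
partitions whose first part is at least `card α - j`. -/
def lowDegree (ρ : Representation k (Perm α) V) (j : ℕ) : Submodule k V :=
  (Finset.univ.powersetCard (Fintype.card α - j)).sup (fixedVectors ρ)

variable {ρ : Representation k (Perm α) V} {R : Finset α} {v : V} {j : ℕ}

lemma fixedVectors_le_lowDegree (hR : R.card = Fintype.card α - j) :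
    fixedVectors ρ R ≤ lowDegree ρ j :=
  Finset.le_sup (f := fixedVectors ρ) (Finset.mem_powersetCard.2 ⟨R.subset_univ, hR⟩)

lemma mem_lowDegree_of_mem_fixedVectors (hR : Fintype.card α - j ≤ R.card)
    (hv : v ∈ fixedVectors ρ R) : v ∈ lowDegree ρ j := by
  obtain ⟨R', hR', hcard⟩ := Finset.exists_subset_card_eq hR
  exact fixedVectors_le_lowDegree hcard <| mem_fixedVectors.2 fun g hg =>
    mem_fixedVectors.1 hv g (supportedIn_mono hR' hg)

lemma isStableOn_lowDegree (S : Finset α) : IsStableOn ρ S (lowDegree ρ j) := by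
  intro g _
  suffices lowDegree ρ j ≤ (lowDegree ρ j).comap (ρ g) from fun v hv => this hv
  refine Finset.sup_le fun R hR v hv => ?_
  refine fixedVectors_le_lowDegree ?_ (apply_mem_fixedVectors_map g hv)
  rw [Finset.card_map, (Finset.mem_powersetCard.1 hR).2]

end LowDegree

section LowDegreeOrthogonal

variable {α E : Type*} [NormedAddCommGroup E] [InnerProductSpace ℝ E]

lemma IsStableOn.orthogonal {ρ : Representation ℝ (Perm α) E} {S : Finset α} {W : Submodule ℝ E}
    (hρ : IsOrthogonal ρ) (hW : IsStableOn ρ S W) : IsStableOn ρ S Wᗮ := by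
  refine fun g hg v hv => (Submodule.mem_orthogonal _ _).2 fun u hu => ?_
  rw [real_inner_comm, hρ.inner_apply, real_inner_comm]
  exact (Submodule.mem_orthogonal _ _).1 hv _ (hW _ (inv_mem hg) u hu)

lemma fixity_orthogonal_lowDegree_le [Fintype α] (ρ : Representation ℝ (Perm α) E) (j : ℕ) :
    fixity ρ (lowDegree ρ j)ᗮ Finset.univ ≤ Fintype.card α - (j + 1) := by
  refine fixity_le fun R _ hne => ?_
  obtain ⟨w, ⟨hw, hwR⟩, hw0⟩ := Submodule.exists_mem_ne_zero_of_ne_bot hne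
  by_contra! hR
  have hlow : w ∈ lowDegree ρ j := mem_lowDegree_of_mem_fixedVectors (by omega) hwR
  exact hw0 (inner_self_eq_zero.1 ((Submodule.mem_orthogonal _ _).1 hw w hlow))

end LowDegreeOrthogonal

section RegularRep

/-- The left regular representation of a finite group on `ℓ²(G)`. -/
def regularRep (G : Type*) [Group G] [Fintype G] : Representation ℝ G (EuclideanSpace ℝ G) where
  toFun g := (LinearIsometryEquiv.piLpCongrLeft 2 ℝ ℝ (Equiv.mulLeft g)).toLinearMap
  map_one' := LinearMap.ext fun f => PiLp.ext fun σ => congrArg f (show 1⁻¹ * σ = σ by simp)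
  map_mul' g h := LinearMap.ext fun f => PiLp.ext fun σ =>
    congrArg f (show (g * h)⁻¹ * σ = h⁻¹ * (g⁻¹ * σ) by simp [mul_assoc])

lemma regularRep_apply {G : Type*} [Group G] [Fintype G] (g : G) (f : EuclideanSpace ℝ G) (σ : G) :
    regularRep G g f σ = f (g⁻¹ * σ) := rfl

lemma isOrthogonal_regularRep (G : Type*) [Group G] [Fintype G] : IsOrthogonal (regularRep G) :=
  fun g => (LinearIsometryEquiv.piLpCongrLeft 2 ℝ ℝ (Equiv.mulLeft g)).inner_map_map

variable {α : Type*} [Fintype α] [DecidableEq α]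

/-- The restriction of `σ⁻¹` to the complement of `R`. -/
def invRestrict (R : Finset α) (σ : Perm α) : {y // y ∉ R} ↪ α :=
  (Function.Embedding.subtype _).trans σ⁻¹.toEmbedding

lemma apply_eq_of_invRestrict_eq {R : Finset α} {f : EuclideanSpace ℝ (Perm α)}
    (hf : f ∈ fixedVectors (regularRep (Perm α)) R) {σ τ : Perm α}
    (h : invRestrict R σ = invRestrict R τ) : f σ = f τ := by
  have hmem : σ * τ⁻¹ ∈ supportedIn R := mem_supportedIn.2 fun y hy => by
    have : σ⁻¹ y = τ⁻¹ y := DFunLike.congr_fun h ⟨y, hy⟩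
    rw [Perm.mul_apply, ← this, Perm.inv_def, apply_symm_apply]
  have := congrArg (· σ) (mem_fixedVectors.1 hf _ hmem)
  simpa [regularRep_apply] using this.symm

lemma finrank_fixedVectors_regularRep_le (R : Finset α) :
    Module.finrank ℝ (fixedVectors (regularRep (Perm α)) R)
      ≤ (Fintype.card α).descFactorial (Fintype.card α - R.card) := by
  let Φ : (({y // y ∉ R} ↪ α) → ℝ) →ₗ[ℝ] EuclideanSpace ℝ (Perm α) :=
    (WithLp.linearEquiv 2 ℝ (Perm α → ℝ)).symm ∘ₗ LinearMap.funLeft ℝ ℝ (invRestrict R)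
  have hle : fixedVectors (regularRep (Perm α)) R ≤ LinearMap.range Φ := by
    intro f hf
    obtain ⟨F, hF⟩ := (Function.factorsThrough_iff (f := invRestrict R) (f : Perm α → ℝ)).1
      fun σ τ h => apply_eq_of_invRestrict_eq hf h
    exact ⟨F, PiLp.ext fun σ => (congrFun hF σ).symm⟩
  refine (Submodule.finrank_mono hle).trans ((LinearMap.finrank_range_le Φ).trans_eq ?_)
  rw [Module.finrank_fintype_fun_eq_card, Fintype.card_embedding_eq]
  simp [Fintype.card_subtype_compl]

lemma finrank_finsetSup_le {ι K E : Type*} [DivisionRing K] [AddCommGroup E] [Module K E]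
    [FiniteDimensional K E] (s : Finset ι) (W : ι → Submodule K E) :
    Module.finrank K ↥(s.sup W) ≤ ∑ i ∈ s, Module.finrank K (W i) := by
  classical
  induction s using Finset.induction_on with
  | empty => simp
  | insert i s hi ih =>
    rw [Finset.sup_insert, Finset.sum_insert hi]
    exact (Submodule.finrank_add_le_finrank_add_finrank _ _).trans (by gcongr)

/-- The number of ways of choosing an ordered `k`-tuple together with a `k`-subset of `N` letters;
it bounds the dimension of `lowDegree (regularRep _) k`. -/
def dimBound (N k : ℕ) : ℕ := N.choose k * N.descFactorial k

lemma finrank_lowDegree_regularRep_le {j : ℕ} (hj : j ≤ Fintype.card α) :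
    Module.finrank ℝ (lowDegree (regularRep (Perm α)) j) ≤ dimBound (Fintype.card α) j := by
  refine (finrank_finsetSup_le _ _).trans ?_
  calc ∑ R ∈ Finset.univ.powersetCard (Fintype.card α - j),
        Module.finrank ℝ (fixedVectors (regularRep (Perm α)) R)
      ≤ ∑ _R ∈ (Finset.univ : Finset α).powersetCard (Fintype.card α - j),
          (Fintype.card α).descFactorial j := Finset.sum_le_sum fun R hR => by
        have := finrank_fixedVectors_regularRep_le R
        rwa [(Finset.mem_powersetCard.1 hR).2, Nat.sub_sub_self hj] at this
    _ = dimBound (Fintype.card α) j := by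
        rw [Finset.sum_const, Finset.card_powersetCard, Finset.card_univ, Nat.choose_symm hj,
          smul_eq_mul, dimBound]

end RegularRep

section EigenvalueCount

variable {ι E : Type*} [Fintype ι] [NormedAddCommGroup E] [InnerProductSpace ℝ E]

lemma eq_zero_of_inner_map_self_le (u : OrthonormalBasis ι ℝ E) {X : E →ₗ[ℝ] E} {e : ι → ℝ}
    (hu : ∀ i, X (u i) = e i • u i) {β : ℝ} {v : E} (hv : ⟪X v, v⟫ ≤ β * ⟪v, v⟫)
    (hperp : ∀ i, e i ≤ β → ⟪u i, v⟫ = 0) : v = 0 := by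
  have hle : ∑ i, (e i - β) * ⟪u i, v⟫ ^ 2 ≤ 0 := by
    rw [inner_map_self_eq_sum u hu, real_inner_self_eq_norm_sq, ← u.sum_sq_inner_right,
      Finset.mul_sum, ← sub_nonpos, ← Finset.sum_sub_distrib] at hv
    simpa only [sub_mul] using hv
  have hnonneg : ∀ i ∈ Finset.univ, 0 ≤ (e i - β) * ⟪u i, v⟫ ^ 2 := fun i _ => by
    rcases le_or_gt (e i) β with hi | hi
    · simp [hperp i hi]
    · exact mul_nonneg (sub_nonneg.2 hi.le) (sq_nonneg _)
  have hzero := (Finset.sum_eq_zero_iff_of_nonneg hnonneg).1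
    (hle.antisymm (Finset.sum_nonneg hnonneg))
  rw [← u.sum_repr' v]
  refine Finset.sum_eq_zero fun i hi => ?_
  rcases le_or_gt (e i) β with hiβ | hiβ
  · rw [hperp i hiβ, zero_smul]
  · rw [pow_eq_zero_iff two_ne_zero |>.1
      ((mul_eq_zero.1 (hzero i hi)).resolve_left (sub_pos.2 hiβ).ne'), zero_smul]

-- The span of the eigenvectors with eigenvalue above `β` meets `Mᗮ` only in `0`.
lemma card_eigenvalue_gt_le_finrank [FiniteDimensional ℝ E] (u : OrthonormalBasis ι ℝ E)
    {X : E →ₗ[ℝ] E} {e : ι → ℝ} (hu : ∀ i, X (u i) = e i • u i) {M : Submodule ℝ E} {β : ℝ}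
    (hM : ∀ v ∈ Mᗮ, ⟪X v, v⟫ ≤ β * ⟪v, v⟫) :
    (Finset.univ.filter fun i => β < e i).card ≤ Module.finrank ℝ M := by
  set I := Finset.univ.filter fun i => β < e i
  set W := Submodule.span ℝ (Set.range (u ∘ ((↑) : I → ι))) with hW
  have hrank : Module.finrank ℝ W = I.card := by
    rw [hW, finrank_span_eq_card (u.orthonormal.comp _ Subtype.val_injective).linearIndependent,
      Fintype.card_coe]
  have hperp : ∀ v ∈ W, ∀ i, e i ≤ β → ⟪u i, v⟫ = 0 := by
    intro v hv i hi
    have : W ≤ (ℝ ∙ u i)ᗮ := Submodule.span_le.2 <| Set.range_subset_iff.2 fun j =>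
      Submodule.mem_orthogonal_singleton_iff_inner_right.2 <| u.orthonormal.2 <| by
        rintro rfl
        exact hi.not_gt (Finset.mem_filter.1 j.2).2
    exact Submodule.mem_orthogonal_singleton_iff_inner_right.1 (this hv)
  have hdisj : Disjoint W Mᗮ := Submodule.disjoint_def.2 fun v hvW hvM =>
    eq_zero_of_inner_map_self_le u hu (hM v hvM) (hperp v hvW)
  have h₁ := Submodule.finrank_add_finrank_le_of_disjoint hdisj
  have h₂ := M.finrank_add_finrank_orthogonal
  omega

lemma sum_le_sum_mul_of_card_gt_le {e : ι → ℝ} {β : ℕ → ℝ} {D : ℕ → ℕ} {N : ℕ} {F : ℝ → ℝ}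
    (hF : Monotone F) (hF0 : ∀ x, 0 ≤ F x) (h0 : ∀ i, e i ≤ β 0)
    (hD : ∀ k < N, (Finset.univ.filter fun i => β (k + 1) < e i).card ≤ D k)
    (hDN : Fintype.card ι ≤ D N) :
    ∑ i, F (e i) ≤ ∑ k ∈ Finset.range (N + 1), D k * F (β k) := by
  have hex : ∀ i, ∃ k ≤ N, e i ≤ β k ∧ (k < N → β (k + 1) < e i) := fun i => by
    refine ⟨Nat.findGreatest (fun k => e i ≤ β k) N, Nat.findGreatest_le N,
      Nat.findGreatest_spec (P := fun k => e i ≤ β k) N.zero_le (h0 i), fun hlt => ?_⟩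
    exact not_le.1 (Nat.findGreatest_is_greatest (Nat.lt_succ_self _) hlt)
  choose κ hκN hκle hκgt using hex
  have hfiber : ∀ k ∈ Finset.range (N + 1), (Finset.univ.filter fun i => κ i = k).card ≤ D k := by
    intro k hk
    rcases (Finset.mem_range_succ_iff.1 hk).lt_or_eq with hlt | rfl
    · refine (Finset.card_le_card fun i hi => ?_).trans (hD k hlt)
      obtain rfl := (Finset.mem_filter.1 hi).2
      exact Finset.mem_filter.2 ⟨Finset.mem_univ i, hκgt i hlt⟩
    · exact (Finset.card_le_univ _).trans hDN
  rw [← Finset.sum_fiberwise_of_maps_to fun i _ => Finset.mem_range_succ_iff.2 (hκN i)]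
  refine Finset.sum_le_sum fun k hk => ?_
  calc ∑ i ∈ Finset.univ.filter fun i => κ i = k, F (e i)
      ≤ (Finset.univ.filter fun i => κ i = k).card * F (β k) := by
        rw [← nsmul_eq_mul]
        refine Finset.sum_le_card_nsmul _ _ _ fun i hi => hF ?_
        exact (Finset.mem_filter.1 hi).2 ▸ hκle i
    _ ≤ D k * F (β k) := mul_le_mul_of_nonneg_right (mod_cast hfiber k hk) (hF0 _)

end EigenvalueCount

section BiasedSpectrum

/-- The bound on the eigenvalues of the shuffle on the isotypic components whose partition has
first part at most `N - k`. -/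
def eigBound (b : ℝ) (N k : ℕ) : ℝ :=
  if 4 * k ≤ N then 1 - 2 * b * k * (N - k + 1) / (N : ℝ) ^ 2 else 1 - b * k / N

variable {α E : Type*} [Fintype α] [DecidableEq α] [NormedAddCommGroup E] [InnerProductSpace ℝ E]
  {ρ : Representation ℝ (Perm α) E} {A : Finset α} {a b : ℝ}

lemma inner_weightedSwapSum_le_eigBound [Nonempty α] [FiniteDimensional ℝ E] (hρ : IsOrthogonal ρ)
    (hb : 0 ≤ b) (hba : b ≤ a) (hab : a + b = 2) (hA : 2 * A.card = Fintype.card α)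
    {W : Submodule ℝ E} (hW : IsStableOn ρ Finset.univ W) {k : ℕ} (hk : k ≤ Fintype.card α)
    (hfix : fixity ρ W Finset.univ ≤ Fintype.card α - k) {v : E} (hv : v ∈ W) :
    ⟪weightedSwapSum ρ (weight a b A) v, v⟫
      ≤ (Fintype.card α : ℝ) ^ 2 * eigBound b (Fintype.card α) k * ⟪v, v⟫ := by
  have hN : (Fintype.card α : ℝ) ≠ 0 := Nat.cast_ne_zero.2 Fintype.card_ne_zero
  refine (inner_weightedSwapSum_le hρ hb hba hab hA v).trans ?_
  rw [eigBound]
  split_ifs with hsmall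
  · have h := mul_le_mul_of_nonneg_left
      (inner_pairSum_le_of_fixity_le hρ hW (k := k) (by rw [Finset.card_univ]; lia) hfix hv) hb
    refine (add_le_add_left h _).trans_eq ?_
    rw [Finset.card_univ]
    field_simp
    ring
  · have hfix' : (fixity ρ W Finset.univ : ℝ) ≤ Fintype.card α - k := by
      rw [← Nat.cast_sub hk]
      exact_mod_cast hfix
    have hle : ⟪pairSum ρ Finset.univ v, v⟫
        ≤ Fintype.card α * (Fintype.card α - k) * ⟪v, v⟫ := by
      refine (inner_pairSum_le_fixity hρ hW hv).trans ?_
      rw [Finset.card_univ]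
      exact mul_le_mul_of_nonneg_right (by gcongr) real_inner_self_nonneg
    refine (add_le_add_left (mul_le_mul_of_nonneg_left hle hb) _).trans_eq ?_
    field_simp
    ring

end BiasedSpectrum

section TransitionMatrix

lemma swap_eq_swap_iff {α : Type*} [DecidableEq α] {x y i j : α} (h : x ≠ y) :
    swap x y = swap i j ↔ (i = x ∧ j = y) ∨ (i = y ∧ j = x) := by
  refine ⟨fun e => ?_, ?_⟩
  · have hx := congrArg (· x) e
    have hy := congrArg (· y) e
    simp only [swap_apply_left, swap_apply_right, swap_apply_def] at hx hy
    grind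
  · rintro (⟨rfl, rfl⟩ | ⟨rfl, rfl⟩)
    · rfl
    · exact swap_comm _ _

lemma sum_ite_one_eq_swap {α M : Type*} [Fintype α] [DecidableEq α] [AddCommMonoid M]
    (F : α → α → M) : (∑ i, ∑ j, if 1 = swap i j then F i j else 0) = ∑ i, F i i := by
  simp [eq_comm (a := (1 : Perm α)), swap_eq_one_iff]

lemma sum_ite_swap_eq_swap {α M : Type*} [Fintype α] [DecidableEq α] [AddCommMonoid M]
    (F : α → α → M) {x y : α} (h : x ≠ y) :
    (∑ i, ∑ j, if swap x y = swap i j then F i j else 0) = F x y + F y x := by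
  have hsplit : ∀ i j, (if swap x y = swap i j then F i j else 0)
      = (if i = x then if j = y then F i j else 0 else 0)
        + (if i = y then if j = x then F i j else 0 else 0) := fun i j => by
    simp only [swap_eq_swap_iff h]
    split_ifs <;> grind
  simp [hsplit, Finset.sum_add_distrib]

lemma sum_weight {α : Type*} [Fintype α] [DecidableEq α] (a b : ℝ) (A : Finset α) :
    ∑ i, weight a b A i = a * A.card + b * Aᶜ.card := by
  simp [weight, Finset.sum_ite, ← Finset.compl_filter, mul_comm]

lemma weight_mul_self {α : Type*} (a b : ℝ) [DecidableEq α] (A : Finset α) (i : α) :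
    weight a b A i * weight a b A i = weight (a ^ 2) (b ^ 2) A i := by
  unfold weight
  split_ifs <;> ring

variable {N : ℕ}

lemma transMat_eq_sum (a b : ℝ) (A : Finset (Fin N)) (x y : Perm (Fin N)) :
    transMat a b A x y = ((N : ℝ) ^ 2)⁻¹ *
      ∑ i, ∑ j, if y * x⁻¹ = swap i j then weight a b A i * weight a b A j else 0 := by
  unfold transMat
  rcases eq_or_ne y x with rfl | hyx
  · rw [if_pos rfl, mul_inv_cancel, sum_ite_one_eq_swap]
    simp only [weight_mul_self, sum_weight]
    ring
  have hg : y * x⁻¹ ≠ 1 := mul_inv_eq_one.not.2 hyx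
  rw [if_neg hyx]
  generalize y * x⁻¹ = g at *
  by_cases hswap : ∃ i j, i ≠ j ∧ g = swap i j
  · obtain ⟨i, j, hij, rfl⟩ := hswap
    have hAA : (∃ k l, k ≠ l ∧ k ∈ A ∧ l ∈ A ∧ swap i j = swap k l) ↔ i ∈ A ∧ j ∈ A := by
      simp only [swap_eq_swap_iff hij]; grind
    have hBB : (∃ k l, k ≠ l ∧ k ∉ A ∧ l ∉ A ∧ swap i j = swap k l) ↔ i ∉ A ∧ j ∉ A := by
      simp only [swap_eq_swap_iff hij]; grind
    have hAB : (∃ k l, k ∈ A ∧ l ∉ A ∧ swap i j = swap k l)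
        ↔ (i ∈ A ∧ j ∉ A) ∨ (j ∈ A ∧ i ∉ A) := by
      simp only [swap_eq_swap_iff hij]; grind
    rw [sum_ite_swap_eq_swap _ hij]
    simp only [hAA, hBB, hAB, weight]
    by_cases hi : i ∈ A <;> by_cases hj : j ∈ A <;>
      simp only [hi, hj, and_self, and_true, and_false, or_false, or_true, not_true_eq_false,
        not_false_eq_true, if_true, if_false] <;> ring
  · have hne : ∀ i j, g ≠ swap i j := by
      rintro i j rfl
      exact hswap ⟨i, j, fun h => hg (swap_eq_one_iff.2 h), rfl⟩
    simp [hne]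

lemma transMat_comm (a b : ℝ) (A : Finset (Fin N)) (x y : Perm (Fin N)) :
    transMat a b A x y = transMat a b A y x := by
  have hinv : ∀ i j, y * x⁻¹ = swap i j ↔ x * y⁻¹ = swap i j := fun i j => by
    rw [← inv_inj, swap_inv, mul_inv_rev, inv_inv]
  simp only [transMat_eq_sum, hinv]

lemma transMat_isHermitian (a b : ℝ) (A : Finset (Fin N)) : (transMat a b A).IsHermitian :=
  Matrix.IsHermitian.ext fun x y => transMat_comm a b A y x

lemma transMat_mul_right (a b : ℝ) (A : Finset (Fin N)) (x y g : Perm (Fin N)) :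
    transMat a b A (x * g) (y * g) = transMat a b A x y := by
  simp only [transMat_eq_sum, mul_inv_rev, mul_assoc, mul_inv_cancel_left]

lemma transMat_mulVec (a b : ℝ) (A : Finset (Fin N)) (f : Perm (Fin N) → ℝ) (x : Perm (Fin N)) :
    (transMat a b A).mulVec f x = ((N : ℝ) ^ 2)⁻¹ *
      ∑ i, ∑ j, weight a b A i * weight a b A j * f (swap i j * x) := by
  simp only [Matrix.mulVec, dotProduct, transMat_eq_sum, mul_assoc, ← Finset.mul_sum,
    Finset.sum_mul]
  rw [Finset.sum_comm]
  congr 1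
  refine Finset.sum_congr rfl fun i _ => ?_
  rw [Finset.sum_comm]
  simp [mul_inv_eq_iff_eq_mul, mul_assoc, Finset.mul_sum]

lemma sum_transMat {a b : ℝ} {A : Finset (Fin N)} (hN : 0 < N) (hab : a + b = 2)
    (hA : 2 * A.card = N) (x : Perm (Fin N)) : ∑ y, transMat a b A x y = 1 := by
  have hcompl : Aᶜ.card = A.card := by rw [Finset.card_compl, Fintype.card_fin]; lia
  have hsum : ∑ i, weight a b A i = N := by
    rw [sum_weight, hcompl, ← add_mul, hab]
    exact_mod_cast hA
  have h := transMat_mulVec a b A 1 x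
  simp only [Matrix.mulVec, dotProduct, Pi.one_apply, mul_one, ← Finset.mul_sum, hsum,
    ← Finset.sum_mul] at h
  rw [h, ← sq, inv_mul_cancel₀ (by positivity)]

lemma toEuclideanLin_transMat (a b : ℝ) (A : Finset (Fin N)) :
    Matrix.toEuclideanLin (transMat a b A)
      = ((N : ℝ) ^ 2)⁻¹ • weightedSwapSum (regularRep (Perm (Fin N))) (weight a b A) := by
  refine LinearMap.ext fun f => PiLp.ext fun x => ?_
  rw [Matrix.toLpLin_apply]
  simp [transMat_mulVec, weightedSwapSum, regularRep_apply, Finset.mul_sum]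

end TransitionMatrix

section ShuffleOperator

variable {α : Type*} [Fintype α] [DecidableEq α]

/-- The transition operator of the biased shuffle of the letters `α` on `ℓ²(𝔖_α)`. -/
def shuffleOp (a b : ℝ) (A : Finset α) : Module.End ℝ (EuclideanSpace ℝ (Perm α)) :=
  ((Fintype.card α : ℝ) ^ 2)⁻¹ • weightedSwapSum (regularRep (Perm α)) (weight a b A)

/-- Pointwise multiplication by the sign. -/
def signTwist (α : Type*) [Fintype α] [DecidableEq α] :
    EuclideanSpace ℝ (Perm α) ≃ₗᵢ[ℝ] EuclideanSpace ℝ (Perm α) :=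
  LinearIsometryEquiv.piLpCongrRight 2 fun σ =>
    if Perm.sign σ = 1 then .refl ℝ ℝ else .neg ℝ

lemma signTwist_apply (f : EuclideanSpace ℝ (Perm α)) (σ : Perm α) :
    signTwist α f σ = (Perm.sign σ : ℤ) * f σ := by
  rcases Int.units_eq_one_or (Perm.sign σ) with h | h <;> simp [signTwist, h]

lemma regularRep_signTwist (g : Perm α) (f : EuclideanSpace ℝ (Perm α)) :
    regularRep _ g (signTwist α f)
      = ((Perm.sign g : ℤ) : ℝ) • signTwist α (regularRep _ g f) := by
  refine PiLp.ext fun σ => ?_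
  simp only [regularRep_apply, signTwist_apply, PiLp.smul_apply, smul_eq_mul, Perm.sign_mul,
    Perm.sign_inv]
  push_cast
  ring

lemma weightedSwapSum_signTwist (w : α → ℝ) (f : EuclideanSpace ℝ (Perm α)) :
    weightedSwapSum (regularRep _) w (signTwist α f)
      = signTwist α ((2 * ∑ i, w i * w i) • f - weightedSwapSum (regularRep _) w f) := by
  have hterm : ∀ i j, (w i * w j) • regularRep _ (swap i j) (signTwist α f)
      = (if i = j then (2 * (w i * w j)) • signTwist α f else 0)
        - (w i * w j) • signTwist α (regularRep _ (swap i j) f) := fun i j => by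
    rw [regularRep_signTwist]
    split_ifs with h
    · subst h
      simp [two_mul, add_smul, ← Perm.one_def]
    · simp [Perm.sign_swap h]
  simp only [weightedSwapSum, LinearMap.sum_apply, LinearMap.smul_apply, hterm,
    Finset.sum_sub_distrib, Finset.sum_ite_eq, Finset.mem_univ, if_true, ← Finset.sum_smul,
    ← Finset.mul_sum, map_sub, map_sum, map_smul]

variable {A : Finset α} {a b : ℝ}

lemma shuffleOp_signTwist [Nonempty α] (hA : 2 * A.card = Fintype.card α)
    (f : EuclideanSpace ℝ (Perm α)) :
    shuffleOp a b A (signTwist α f)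
      = signTwist α (((a ^ 2 + b ^ 2) / Fintype.card α) • f - shuffleOp a b A f) := by
  have hcompl : Aᶜ.card = A.card := by rw [Finset.card_compl]; lia
  have hcard : (Fintype.card α : ℝ) = 2 * A.card := by rw [← hA]; push_cast; rfl
  have hN : (Fintype.card α : ℝ) ≠ 0 := Nat.cast_ne_zero.2 Fintype.card_ne_zero
  have hδ : ((Fintype.card α : ℝ) ^ 2)⁻¹ * (2 * ∑ i, weight a b A i * weight a b A i)
      = (a ^ 2 + b ^ 2) / Fintype.card α := by
    simp only [weight_mul_self, sum_weight, hcompl]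
    field_simp
    rw [hcard]
  rw [shuffleOp, LinearMap.smul_apply, weightedSwapSum_signTwist, ← map_smul, smul_sub, smul_smul,
    hδ, LinearMap.smul_apply]

variable [Nonempty α]

lemma inner_shuffleOp_le_eigBound (hb : 0 ≤ b) (hba : b ≤ a) (hab : a + b = 2)
    (hA : 2 * A.card = Fintype.card α) {W : Submodule ℝ (EuclideanSpace ℝ (Perm α))}
    (hW : IsStableOn (regularRep _) Finset.univ W) {k : ℕ} (hk : k ≤ Fintype.card α)
    (hfix : fixity (regularRep _) W Finset.univ ≤ Fintype.card α - k)
    {v : EuclideanSpace ℝ (Perm α)} (hv : v ∈ W) :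
    ⟪shuffleOp a b A v, v⟫ ≤ eigBound b (Fintype.card α) k * ⟪v, v⟫ := by
  rw [shuffleOp, LinearMap.smul_apply, real_inner_smul_left,
    inv_mul_le_iff₀ (pow_pos (Nat.cast_pos.2 Fintype.card_pos) 2), ← mul_assoc]
  exact inner_weightedSwapSum_le_eigBound (isOrthogonal_regularRep _) hb hba hab hA hW hk hfix hv

lemma sum_eigenvalue_shuffleOp_le (hb : 0 ≤ b) (hba : b ≤ a) (hab : a + b = 2)
    (hA : 2 * A.card = Fintype.card α) {ι : Type*} [Fintype ι]
    (u : OrthonormalBasis ι ℝ (EuclideanSpace ℝ (Perm α))) {e : ι → ℝ}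
    (hu : ∀ i, shuffleOp a b A (u i) = e i • u i) {F : ℝ → ℝ} (hF : Monotone F)
    (hF0 : ∀ x, 0 ≤ F x) :
    ∑ i, F (e i) ≤ ∑ k ∈ Finset.range (Fintype.card α + 1),
      dimBound (Fintype.card α) k * F (eigBound b (Fintype.card α) k) := by
  refine sum_le_sum_mul_of_card_gt_le hF hF0 (fun i => ?_) (fun k hk => ?_) ?_
  · have h := inner_shuffleOp_le_eigBound hb hba hab hA isStableOn_top (Nat.zero_le _)
      (fixity_le fun R _ _ => R.card_le_univ) (Submodule.mem_top (x := u i))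
    simpa [hu, real_inner_smul_left, real_inner_self_eq_norm_sq] using h
  · refine (card_eigenvalue_gt_le_finrank u hu fun v hv => ?_).trans
      (finrank_lowDegree_regularRep_le hk.le)
    exact inner_shuffleOp_le_eigBound hb hba hab hA
      ((isStableOn_lowDegree _).orthogonal (isOrthogonal_regularRep _)) hk
      (fixity_orthogonal_lowDegree_le _ _) hv
  · have h := Module.finrank_eq_card_basis u.toBasis
    rw [finrank_euclideanSpace, Fintype.card_perm] at h
    rw [← h, dimBound, Nat.choose_self, Nat.descFactorial_self, one_mul]

-- Multiplying an eigenvector by the sign reflects its eigenvalue at `(a² + b²) / (2N)`, so the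
-- negative eigenvalues are controlled by the same count as the positive ones.
lemma sum_eigenvalue_shuffleOp_pow_le (hb : 0 ≤ b) (hba : b ≤ a) (hab : a + b = 2)
    (hA : 2 * A.card = Fintype.card α) {ι : Type*} [Fintype ι]
    (u : OrthonormalBasis ι ℝ (EuclideanSpace ℝ (Perm α))) {e : ι → ℝ}
    (hu : ∀ i, shuffleOp a b A (u i) = e i • u i) {m : ℕ} (hm : Even m) :
    ∑ i, e i ^ m ≤ ∑ k ∈ Finset.range (Fintype.card α + 1), dimBound (Fintype.card α) k *
      ((eigBound b (Fintype.card α) k)⁺ ^ m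
        + (eigBound b (Fintype.card α) k - 2 / Fintype.card α)⁺ ^ m) := by
  set δ := (a ^ 2 + b ^ 2) / Fintype.card α with hδ
  have hδ_ge : 2 / (Fintype.card α : ℝ) ≤ δ := by
    rw [hδ]
    gcongr
    nlinarith [sq_nonneg (a - b)]
  have hpos := sum_eigenvalue_shuffleOp_le hb hba hab hA u hu (F := fun x => x⁺ ^ m)
    (fun x y h => pow_le_pow_left₀ (posPart_nonneg _) (posPart_mono h) m) (fun x => by positivity)
  have hneg := sum_eigenvalue_shuffleOp_le hb hba hab hA (u.map (signTwist α))
    (e := fun i => δ - e i) (F := fun x => (x - 2 / Fintype.card α)⁺ ^ m)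
    (fun i => by rw [OrthonormalBasis.map_apply, shuffleOp_signTwist hA, hu, ← sub_smul, map_smul])
    (fun x y h => pow_le_pow_left₀ (posPart_nonneg _) (posPart_mono (sub_le_sub_right h _)) m)
    (fun x => by positivity)
  simp only [mul_add, Finset.sum_add_distrib]
  refine le_trans ?_ (add_le_add hpos hneg)
  rw [← Finset.sum_add_distrib]
  refine Finset.sum_le_sum fun i _ => ?_
  rcases le_total 0 (e i) with h | h
  · rw [posPart_of_nonneg h]
    exact le_add_of_nonneg_right (by positivity)
  · have hneg_le : -e i ≤ δ - e i - 2 / Fintype.card α := by linarith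
    calc e i ^ m = (-e i) ^ m := (hm.neg_pow _).symm
      _ ≤ (δ - e i - 2 / Fintype.card α)⁺ ^ m :=
          pow_le_pow_left₀ (neg_nonneg.2 h) (hneg_le.trans (le_posPart _)) m
      _ ≤ _ := le_add_of_nonneg_left (by positivity)

end ShuffleOperator

section Trace

lemma trace_pow_eq_sum_eigenvalues_pow {n : Type*} [Fintype n] [DecidableEq n] {M : Matrix n n ℝ}
    (hM : M.IsHermitian) (m : ℕ) : (M ^ m).trace = ∑ i, hM.eigenvalues i ^ m := by
  conv_lhs =>
    rw [hM.spectral_theorem, ← map_pow, Unitary.conjStarAlgAut_apply, Matrix.trace_mul_cycle,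
      Unitary.coe_star_mul_self, one_mul, Matrix.diagonal_pow, Matrix.trace_diagonal]
  simp

theorem trace_transMat_pow_le {N : ℕ} {A : Finset (Fin N)} {a b : ℝ} (hN : 0 < N) (hb : 0 ≤ b)
    (hba : b ≤ a) (hab : a + b = 2) (hA : 2 * A.card = N) {m : ℕ} (hm : Even m) :
    (transMat a b A ^ m).trace ≤ ∑ k ∈ Finset.range (N + 1), dimBound N k *
      ((eigBound b N k)⁺ ^ m + (eigBound b N k - 2 / N)⁺ ^ m) := by
  have : Nonempty (Fin N) := ⟨⟨0, hN⟩⟩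
  have hH := transMat_isHermitian a b A
  have hop : Matrix.toEuclideanLin (transMat a b A) = shuffleOp a b A := by
    rw [toEuclideanLin_transMat, shuffleOp, Fintype.card_fin]
  have hu : ∀ i, shuffleOp a b A (hH.eigenvectorBasis i)
      = hH.eigenvalues i • hH.eigenvectorBasis i := fun i => by
    rw [← hop, Matrix.toLpLin_apply, hH.mulVec_eigenvectorBasis]
    rfl
  rw [trace_pow_eq_sum_eigenvalues_pow hH]
  simpa only [Fintype.card_fin] using
    sum_eigenvalue_shuffleOp_pow_le hb hba hab (by rw [hA, Fintype.card_fin])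
      hH.eigenvectorBasis hu hm

end Trace

section TotalVariation

lemma sq_two_mul_dTV_const_le {α : Type*} [Fintype α] {p : α → ℝ} (hp : ∑ x, p x = 1) :
    (2 * dTV p fun _ => (Fintype.card α : ℝ)⁻¹) ^ 2 ≤ Fintype.card α * ∑ x, p x ^ 2 - 1 := by
  rcases isEmpty_or_nonempty α with _ | _
  · simp at hp
  have hcard : (Fintype.card α : ℝ) ≠ 0 := Nat.cast_ne_zero.2 Fintype.card_ne_zero
  calc (2 * dTV p fun _ => (Fintype.card α : ℝ)⁻¹) ^ 2
      = (∑ x, |p x - (Fintype.card α : ℝ)⁻¹|) ^ 2 := by rw [dTV, mul_div_cancel₀ _ two_ne_zero]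
    _ ≤ Fintype.card α * ∑ x, |p x - (Fintype.card α : ℝ)⁻¹| ^ 2 :=
        sq_sum_le_card_mul_sum_sq
    _ = Fintype.card α * ∑ x, p x ^ 2 - 1 := by
        simp only [sq_abs, sub_sq, Finset.sum_add_distrib, Finset.sum_sub_distrib,
          ← Finset.sum_mul, ← Finset.mul_sum, hp, Finset.sum_const, Finset.card_univ, nsmul_eq_mul]
        field_simp
        ring

lemma sum_pow_apply_eq_one {α : Type*} [Fintype α] [DecidableEq α] {P : Matrix α α ℝ}
    (hP : ∀ x, ∑ y, P x y = 1) (t : ℕ) (x : α) : ∑ y, (P ^ t) x y = 1 := by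
  induction t with
  | zero => simp [Matrix.one_apply]
  | succ t ih =>
    simp only [pow_succ, Matrix.mul_apply]
    rw [Finset.sum_comm]
    simp only [← Finset.mul_sum, hP, mul_one, ih]

variable {G : Type*} [Group G] [Fintype G]

lemma trace_eq_card_mul_of_mul_right {M : Matrix G G ℝ}
    (hM : ∀ x y g, M (x * g) (y * g) = M x y) : M.trace = Fintype.card G * M 1 1 := by
  have hdiag : ∀ x, M x x = M 1 1 := fun x => by simpa only [one_mul] using hM 1 1 x
  simp [Matrix.trace, hdiag]

variable [DecidableEq G] {P : Matrix G G ℝ}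

lemma pow_apply_mul_right (hP : ∀ x y g, P (x * g) (y * g) = P x y) (t : ℕ) (x y g : G) :
    (P ^ t) (x * g) (y * g) = (P ^ t) x y := by
  induction t generalizing y with
  | zero => simp [Matrix.one_apply]
  | succ t ih =>
    rw [pow_succ, Matrix.mul_apply, Matrix.mul_apply, ← Equiv.sum_comp (Equiv.mulRight g)]
    simp only [Equiv.coe_mulRight, ih, hP]

theorem sq_two_mul_dTV_pow_le_trace (hrow : ∀ x, ∑ y, P x y = 1) (hsymm : P.IsSymm)
    (hinv : ∀ x y g, P (x * g) (y * g) = P x y) (t : ℕ) :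
    (2 * dTV ((P ^ t) 1) fun _ => (Fintype.card G : ℝ)⁻¹) ^ 2 ≤ (P ^ (2 * t)).trace - 1 := by
  have hreturn : (P ^ (2 * t)) 1 1 = ∑ y, (P ^ t) 1 y ^ 2 := by
    rw [two_mul, pow_add, Matrix.mul_apply]
    exact Finset.sum_congr rfl fun y _ => by rw [(hsymm.pow t).apply 1 y, sq]
  rw [trace_eq_card_mul_of_mul_right (pow_apply_mul_right hinv _), hreturn]
  exact sq_two_mul_dTV_const_le (sum_pow_apply_eq_one hrow t 1)

end TotalVariation

section Asymptotics

open Real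

lemma posPart_pow_le_exp {x y : ℝ} (h : x ≤ exp (-y)) (m : ℕ) : x⁺ ^ m ≤ exp (-(y * m)) :=
  calc x⁺ ^ m ≤ exp (-y) ^ m :=
        pow_le_pow_left₀ (posPart_nonneg x) (max_le h (exp_nonneg _)) m
    _ = exp (-(y * m)) := by rw [← exp_nat_mul]; ring_nf

lemma one_sub_le_exp_neg_add_sq {x : ℝ} (hx : 0 ≤ x) : 1 - x ≤ exp (-(x + x ^ 2 / 2)) := by
  rcases le_or_gt 1 x with h | h
  · exact (sub_nonpos.2 h).trans (exp_nonneg _)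
  · have hsum := sum_le_hasSum (Finset.range 2) (fun i _ => by positivity)
      (hasSum_pow_div_log_of_abs_lt_one (by rwa [abs_of_nonneg hx]))
    norm_num [Finset.sum_range_succ] at hsum
    rw [← log_le_iff_le_exp (sub_pos.2 h)]
    linarith

lemma inv_factorial_le_exp (k : ℕ) : (k.factorial : ℝ)⁻¹ ≤ exp (k * (1 - log k)) := by
  rcases k.eq_zero_or_pos with rfl | hk
  · simp
  have hk : (0 : ℝ) < k := Nat.cast_pos.2 hk
  have hpow : exp (k * (1 - log k)) = exp k / (k : ℝ) ^ k := by
    rw [mul_sub, mul_one, exp_sub, exp_nat_mul (log k), exp_log hk]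
  rw [hpow, le_div_iff₀ (pow_pos hk k), inv_mul_eq_div]
  exact pow_div_factorial_le_exp _ hk.le k

variable {N : ℕ}

lemma descFactorial_le_exp (hN : 0 < N) (k : ℕ) : (N.descFactorial k : ℝ) ≤ exp (k * log N) := by
  rw [exp_nat_mul, exp_log (Nat.cast_pos.2 hN)]
  exact_mod_cast Nat.descFactorial_le_pow N k

lemma dimBound_le_exp_of_choose_le_pow_div (hN : 0 < N) (k : ℕ) :
    (dimBound N k : ℝ) ≤ exp (k * (2 * log N + 1 - log k)) := by
  have hchoose : (N.choose k : ℝ) ≤ exp (k * log N) * exp (k * (1 - log k)) :=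
    calc (N.choose k : ℝ) ≤ (N : ℝ) ^ k / k.factorial := Nat.choose_le_pow_div k N
      _ = exp (k * log N) * (k.factorial : ℝ)⁻¹ := by
          rw [exp_nat_mul, exp_log (Nat.cast_pos.2 hN), div_eq_mul_inv]
      _ ≤ _ := by gcongr; exact inv_factorial_le_exp k
  calc (dimBound N k : ℝ) = N.choose k * N.descFactorial k := by rw [dimBound, Nat.cast_mul]
    _ ≤ exp (k * log N) * exp (k * (1 - log k)) * exp (k * log N) := by
        gcongr
        exact descFactorial_le_exp hN k
    _ = exp (k * (2 * log N + 1 - log k)) := by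
        rw [← exp_add, ← exp_add]
        ring_nf

lemma dimBound_le_exp_of_choose_le_two_pow (hN : 0 < N) (k : ℕ) :
    (dimBound N k : ℝ) ≤ exp (N * log 2 + k * log N) := by
  have hchoose : (N.choose k : ℝ) ≤ exp (N * log 2) := by
    rw [exp_nat_mul, exp_log two_pos]
    exact_mod_cast Nat.choose_le_two_pow N k
  rw [dimBound, Nat.cast_mul, exp_add]
  gcongr
  exact descFactorial_le_exp hN k

lemma two_mul_div_mul_log_le {k : ℕ} (hk : 0 < k) (hkN : 4 * k ≤ N) :
    2 * k / N * log N ≤ log k / 2 + 2 := by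
  have hk : (1 : ℝ) ≤ k := Nat.one_le_cast.2 hk
  have hkN : 4 * (k : ℝ) ≤ N := by exact_mod_cast hkN
  have hN : (0 : ℝ) < N := by linarith
  have hlog : log N = log k + log (N / k) := by
    rw [log_div (by positivity) (by positivity)]
    ring
  have hhalf : 2 * (k : ℝ) / N ≤ 1 / 2 := by
    rw [div_le_div_iff₀ hN two_pos]
    linarith
  calc 2 * k / N * log N = 2 * k / N * log k + 2 * k / N * log (N / k) := by rw [hlog, mul_add]
    _ ≤ 1 / 2 * log k + 2 * k / N * (N / k) := by
        gcongr
        exact log_le_self (by positivity)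
    _ = log k / 2 + 2 := by field_simp

/-- The summable sequence dominating, up to the factor `exp (-2 * c)`, the contributions of the
eigenvalue bounds `eigBound b N k` with `4 * k ≤ N`. -/
def tailTerm (k : ℕ) : ℝ := exp (k * (3 - log k / 2))

lemma tailTerm_nonneg (k : ℕ) : 0 ≤ tailTerm k := exp_nonneg _

lemma summable_tailTerm : Summable tailTerm := by
  refine .of_norm_bounded_eventually_nat (g := fun k => exp (-(k : ℝ))) summable_exp_neg_nat ?_
  filter_upwards [Filter.eventually_ge_atTop ⌈exp 8⌉₊] with k hk
  have hk : exp 8 ≤ k := Nat.ceil_le.1 hk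
  have hlog : 8 ≤ log k := (le_log_iff_exp_le ((exp_pos 8).trans_le hk)).2 hk
  rw [norm_of_nonneg (tailTerm_nonneg k), tailTerm, exp_le_exp]
  nlinarith [k.cast_nonneg (α := ℝ)]

variable {b c : ℝ} {k m : ℕ}

lemma eigBound_pow_le_exp_of_four_mul_le (hb : 0 < b) (hN : 0 < N) (hkN : 4 * k ≤ N)
    (hm : N / b * (log N + c) ≤ m) :
    (eigBound b N k)⁺ ^ m ≤ exp (-(2 * k * (N - k + 1) / N * (log N + c))) := by
  have hkN' : 4 * (k : ℝ) ≤ N := by exact_mod_cast hkN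
  have hN : (0 : ℝ) < N := Nat.cast_pos.2 hN
  have hgap : 0 ≤ (N : ℝ) - k + 1 := by linarith [k.cast_nonneg (α := ℝ)]
  have hexp : eigBound b N k ≤ exp (-(2 * b * k * (N - k + 1) / (N : ℝ) ^ 2)) := by
    rw [eigBound, if_pos hkN]
    exact one_sub_le_exp_neg _
  refine (posPart_pow_le_exp hexp m).trans (exp_le_exp.2 (neg_le_neg ?_))
  calc 2 * k * (N - k + 1) / N * (log N + c)
      = 2 * b * k * (N - k + 1) / (N : ℝ) ^ 2 * (N / b * (log N + c)) := by field_simp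
    _ ≤ _ := by gcongr

lemma dimBound_mul_eigBound_pow_le_tailTerm (hb : 0 < b) (hc : 0 ≤ c) (hk : 0 < k)
    (hkN : 4 * k ≤ N) (hm : N / b * (log N + c) ≤ m) :
    dimBound N k * (eigBound b N k)⁺ ^ m ≤ exp (-2 * c) * tailTerm k := by
  have hN : 0 < N := by lia
  have hk1 : (1 : ℝ) ≤ k := Nat.one_le_cast.2 hk
  have hkN' : 4 * (k : ℝ) ≤ N := by exact_mod_cast hkN
  have hN' : (0 : ℝ) < N := Nat.cast_pos.2 hN
  set q : ℝ := 2 * k * (N - k + 1) / N with hq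
  have hq_ge : 2 ≤ q := by
    rw [hq, le_div_iff₀ hN']
    nlinarith
  have hlog : (2 * k - q) * log N ≤ k * (log k / 2 + 2) :=
    calc (2 * k - q) * log N = (k - 1) * (2 * k / N * log N) := by
          rw [hq]
          field_simp
          ring
      _ ≤ k * (2 * k / N * log N) := by
          gcongr
          linarith
      _ ≤ k * (log k / 2 + 2) := by
          gcongr
          exact two_mul_div_mul_log_le hk hkN
  calc dimBound N k * (eigBound b N k)⁺ ^ m
      ≤ exp (k * (2 * log N + 1 - log k)) * exp (-(q * (log N + c))) := by
        gcongr
        exacts [dimBound_le_exp_of_choose_le_pow_div hN k,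
          eigBound_pow_le_exp_of_four_mul_le hb hN hkN hm]
    _ ≤ exp (-2 * c) * tailTerm k := by
        rw [tailTerm, ← exp_add, ← exp_add, exp_le_exp]
        linarith [mul_le_mul_of_nonneg_right hq_ge hc]

lemma dimBound_mul_eigBound_pow_le_exp (hb : 0 < b) (hc : 0 ≤ c) (hN : 4 ≤ N)
    (hkN : N < 4 * k) (hm : N / b * (log N + c) ≤ m) :
    dimBound N k * (eigBound b N k)⁺ ^ m
      ≤ exp (-2 * c) * exp (N * (log 2 - b / 32 * log N)) := by
  have hN0 : (0 : ℝ) < N := Nat.cast_pos.2 (by lia)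
  have hk : (2 : ℝ) ≤ k := Nat.ofNat_le_cast.2 (by lia)
  have : 0 ≤ log N := log_natCast_nonneg N
  set x : ℝ := b * k / N with hx
  have hexp : eigBound b N k ≤ exp (-(x + x ^ 2 / 2)) := by
    rw [eigBound, if_neg hkN.not_ge]
    exact one_sub_le_exp_neg_add_sq (by positivity)
  have hsq : b * N / 32 ≤ b * k ^ 2 / (2 * N) := by
    rw [div_le_div_iff₀ (by norm_num) (by positivity)]
    have hkN' : (N : ℝ) ^ 2 ≤ (4 * k) ^ 2 := by gcongr; exact_mod_cast hkN.le
    nlinarith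
  have hxm : (k + b * N / 32) * log N + 2 * c ≤ (x + x ^ 2 / 2) * m :=
    calc (k + b * N / 32) * log N + 2 * c
        ≤ (k + b * k ^ 2 / (2 * N)) * log N + (k + b * k ^ 2 / (2 * N)) * c := by
          gcongr
          exact hk.trans (le_add_of_nonneg_right (by positivity))
      _ = (x + x ^ 2 / 2) * (N / b * (log N + c)) := by
          rw [hx]
          field_simp
      _ ≤ _ := by gcongr
  calc dimBound N k * (eigBound b N k)⁺ ^ m
      ≤ exp (N * log 2 + k * log N) * exp (-((x + x ^ 2 / 2) * m)) := by
        gcongr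
        exacts [dimBound_le_exp_of_choose_le_two_pow (Nat.cast_pos.1 hN0) k,
          posPart_pow_le_exp hexp m]
    _ ≤ exp (-2 * c) * exp (N * (log 2 - b / 32 * log N)) := by
        rw [← exp_add, ← exp_add, exp_le_exp]
        linarith

lemma natCast_mul_exp_le_one (hb : 0 < b) (hN : 64 * log 2 / b ≤ log N) :
    N * exp (N * (log 2 - b / 32 * log N)) ≤ 1 := by
  have hpow : (N : ℝ) ≤ exp (N * log 2) := by
    rw [exp_nat_mul, exp_log two_pos]
    exact_mod_cast Nat.lt_two_pow_self.le
  rw [div_le_iff₀ hb] at hN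
  calc N * exp (N * (log 2 - b / 32 * log N))
      ≤ exp (N * log 2) * exp (N * (log 2 - b / 32 * log N)) := by gcongr
    _ = exp (N * (2 * log 2 - b / 32 * log N)) := by
        rw [← exp_add]
        ring_nf
    _ ≤ 1 := exp_le_one_iff.2 (mul_nonpos_of_nonneg_of_nonpos N.cast_nonneg (by linarith))

lemma sum_dimBound_mul_eigBound_pow_le (hb : 0 < b) (hc : 0 ≤ c) (hN : 4 ≤ N)
    (hlogN : 64 * log 2 / b ≤ log N) (hm : N / b * (log N + c) ≤ m) :
    ∑ k ∈ Finset.range N, dimBound N (k + 1) * (eigBound b N (k + 1))⁺ ^ m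
      ≤ exp (-2 * c) * (∑' k, tailTerm k + 1) := by
  have hterm : ∀ k, dimBound N (k + 1) * (eigBound b N (k + 1))⁺ ^ m
      ≤ exp (-2 * c) * (tailTerm (k + 1) + exp (N * (log 2 - b / 32 * log N))) := fun k => by
    rcases le_or_gt (4 * (k + 1)) N with h | h
    · refine (dimBound_mul_eigBound_pow_le_tailTerm hb hc k.succ_pos h hm).trans ?_
      gcongr
      exact le_add_of_nonneg_right (exp_nonneg _)
    · refine (dimBound_mul_eigBound_pow_le_exp hb hc hN h hm).trans ?_
      gcongr
      exact le_add_of_nonneg_left (tailTerm_nonneg _)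
  have htail : ∑ k ∈ Finset.range N, tailTerm (k + 1) ≤ ∑' k, tailTerm k :=
    calc ∑ k ∈ Finset.range N, tailTerm (k + 1) ≤ ∑ k ∈ Finset.range (N + 1), tailTerm k := by
          rw [Finset.sum_range_succ']
          exact le_add_of_nonneg_right (tailTerm_nonneg 0)
      _ ≤ _ := summable_tailTerm.sum_le_tsum _ fun k _ => tailTerm_nonneg k
  calc _ ≤ ∑ k ∈ Finset.range N,
        exp (-2 * c) * (tailTerm (k + 1) + exp (N * (log 2 - b / 32 * log N))) :=
          Finset.sum_le_sum fun k _ => hterm k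
    _ = exp (-2 * c) * (∑ k ∈ Finset.range N, tailTerm (k + 1)
          + N * exp (N * (log 2 - b / 32 * log N))) := by
        rw [← Finset.mul_sum, Finset.sum_add_distrib, Finset.sum_const, Finset.card_range,
          nsmul_eq_mul]
    _ ≤ _ := by
        gcongr
        exact natCast_mul_exp_le_one hb hlogN

lemma one_sub_two_div_posPart_pow_le (hb : 0 < b) (hb1 : b ≤ 1) (hc : 0 ≤ c) (hN : 0 < N)
    (hm : N / b * (log N + c) ≤ m) : (1 - 2 / (N : ℝ))⁺ ^ m ≤ exp (-2 * c) := by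
  refine (posPart_pow_le_exp (one_sub_le_exp_neg _) m).trans (exp_le_exp.2 ?_)
  rw [neg_mul, neg_le_neg_iff]
  have hN : (0 : ℝ) < N := Nat.cast_pos.2 hN
  calc 2 * c ≤ 2 * (log N + c) := by linarith [log_natCast_nonneg N]
    _ = 2 / N * (N * (log N + c)) := by field_simp
    _ ≤ 2 / N * (N / b * (log N + c)) := by
        gcongr
        exact le_div_self hN.le hb hb1
    _ ≤ 2 / N * m := by gcongr

theorem sum_dimBound_mul_le (hb : 0 < b) (hb1 : b ≤ 1) (hc : 0 ≤ c) (hN : 4 ≤ N)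
    (hlogN : 64 * log 2 / b ≤ log N) (hm : N / b * (log N + c) ≤ m) :
    ∑ k ∈ Finset.range (N + 1), dimBound N k *
        ((eigBound b N k)⁺ ^ m + (eigBound b N k - 2 / N)⁺ ^ m)
      ≤ 1 + (1 + 2 * (∑' k, tailTerm k + 1)) * exp (-2 * c) := by
  have hzero : dimBound N 0 = 1 ∧ eigBound b N 0 = 1 := by simp [dimBound, eigBound]
  have hmono : ∀ k, dimBound N k * ((eigBound b N k)⁺ ^ m + (eigBound b N k - 2 / N)⁺ ^ m)
      ≤ 2 * (dimBound N k * (eigBound b N k)⁺ ^ m) := fun k =>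
    calc _ ≤ dimBound N k * ((eigBound b N k)⁺ ^ m + (eigBound b N k)⁺ ^ m) := by
          gcongr
          exact posPart_mono (sub_le_self _ (by positivity))
      _ = _ := by ring
  have hfirst := one_sub_two_div_posPart_pow_le hb hb1 hc (by lia) hm
  have hrest := sum_dimBound_mul_eigBound_pow_le hb hc hN hlogN hm
  rw [Finset.sum_range_succ', hzero.1, hzero.2, posPart_of_nonneg zero_le_one, one_pow,
    Nat.cast_one, one_mul]
  have hsum := Finset.sum_le_sum (s := Finset.range N) fun k _ => hmono (k + 1)
  rw [← Finset.mul_sum] at hsum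
  linarith

end Asymptotics

theorem sq_two_mul_dTV_transMat_pow_le {N : ℕ} {A : Finset (Fin N)} {a b : ℝ} (hN : 0 < N)
    (hab : a + b = 2) (hA : 2 * A.card = N) (t : ℕ) :
    (2 * dTV ((transMat a b A ^ t) 1) (unif N)) ^ 2 ≤ (transMat a b A ^ (2 * t)).trace - 1 := by
  have hunif : unif N = fun _ => (Fintype.card (Perm (Fin N)) : ℝ)⁻¹ := by
    rw [Fintype.card_perm, Fintype.card_fin]
    rfl
  rw [hunif]
  exact sq_two_mul_dTV_pow_le_trace (sum_transMat hN hab hA)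
    (Matrix.IsSymm.ext fun x y => transMat_comm a b A y x) (transMat_mul_right a b A) t

theorem brt_upper_bound_general :
    ∃ C : ℝ, 0 < C ∧ ∀ a b : ℝ, 0 < b → b ≤ a → a + b = 2 →
      ∃ N0 : ℕ, ∀ N ≥ N0, ∀ c : ℝ, 0 ≤ c → ∀ A : Finset (Fin N), 2 * A.card = N →
        dTV ((transMat a b A ^ ⌈(N / (2 * b)) * (Real.log N + c)⌉₊) 1) (unif N)
          ≤ C * Real.exp (-c) := by
  set K : ℝ := 1 + 2 * (∑' k, tailTerm k + 1)
  have hK : 0 < K := by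
    have htail : 0 ≤ ∑' k, tailTerm k := tsum_nonneg tailTerm_nonneg
    positivity
  refine ⟨√K, Real.sqrt_pos.2 hK, fun a b hb hba hab =>
    ⟨max 4 ⌈Real.exp (64 * Real.log 2 / b)⌉₊, fun N hN c hc A hA => ?_⟩⟩
  have hN4 : 4 ≤ N := (le_max_left _ _).trans hN
  have hlogN : 64 * Real.log 2 / b ≤ Real.log N :=
    (Real.le_log_iff_exp_le (Nat.cast_pos.2 (by lia))).2
      (Nat.ceil_le.1 ((le_max_right _ _).trans hN))
  set t := ⌈(N / (2 * b)) * (Real.log N + c)⌉₊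
  have hm : N / b * (Real.log N + c) ≤ (2 * t : ℕ) :=
    calc N / b * (Real.log N + c) = 2 * (N / (2 * b) * (Real.log N + c)) := by field_simp
      _ ≤ 2 * t := by gcongr; exact Nat.le_ceil _
      _ = (2 * t : ℕ) := by push_cast; rfl
  have hsq := calc (2 * dTV ((transMat a b A ^ t) 1) (unif N)) ^ 2
      ≤ (transMat a b A ^ (2 * t)).trace - 1 :=
        sq_two_mul_dTV_transMat_pow_le (by lia) hab hA t
    _ ≤ K * Real.exp (-2 * c) := sub_le_iff_le_add'.2 <|
        (trace_transMat_pow_le (by lia) hb.le hba hab hA (even_two_mul t)).trans <|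
          sum_dimBound_mul_le hb (by linarith) hc hN4 hlogN hm
    _ = (√K * Real.exp (-c)) ^ 2 := by
        rw [mul_pow, Real.sq_sqrt hK.le, ← Real.exp_nat_mul]
        ring_nf
  have h2 := abs_le_of_sq_le_sq' hsq (by positivity)
  linarith [mul_pos (Real.sqrt_pos.2 hK) (Real.exp_pos (-c))]

/-- Cutoff upper bound for the biased random transposition shuffle:
there is a universal constant `C > 0` such that for every `c > 0` and all sufficiently
large `N = 2n`, `d_TV(P^t(id, ·), U) ≤ C e^{-c}` where `t = ⌈(N/(2b))(log N + c)⌉`. -/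
theorem brt_upper_bound (a b : ℝ) (hb : 0 < b) (hba : b ≤ a) (hab : a + b = 2) :
    ∃ C : ℝ, 0 < C ∧ ∀ c : ℝ, 0 < c → ∃ n0 : ℕ, ∀ n : ℕ, n0 ≤ n →
      ∀ A : Finset (Fin (2 * n)), A.card = n →
        dTV
          (fun y => (transMat a b A ^
            ⌈((2 * n : ℝ) / (2 * b)) * (Real.log (2 * n) + c)⌉₊) 1 y)
          (unif (2 * n)) ≤ C * Real.exp (-c) := by
  obtain ⟨C, hC, h⟩ := brt_upper_bound_general
  obtain ⟨N0, hN0⟩ := h a b hb hba hab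
  refine ⟨C, hC, fun c hc => ⟨N0, fun n hn A hA => ?_⟩⟩
  simpa only [Nat.cast_mul, Nat.cast_ofNat] using hN0 (2 * n) (by lia) c hc.le A (by rw [hA])

end BRT
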